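/- arXiv:0806.4885 — 6 statements merged into one kernel-verified Lean document; each statement's English description precedes it below -/
import Mathlib

section
/- Let f : ℝ → ℝ be continuously differentiable and let u : ℝ^N → ℝ be a nonconstant C³ function satisfying Δu + f(u) = 0 on all of ℝ^N. Assume that DV ≡ 0 on U, i.e. the normalized gradient V = ∇u/‖∇u‖ has vanishing derivative at every point of U = {x : ∇u(x) ≠ 0}. Then there exist a unit vector e ∈ ℝ^N and a C² function h : ℝ → ℝ such that u(x) = h(⟨x, e⟩) for all x ∈ ℝ^N. -/
open RealInnerProductSpace MeasureTheory Filter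

/-- The Hessian bilinear form of `u : ℝ^N → ℝ` at `x`, applied to `w₁, w₂`. -/
noncomputable def Hess {N : ℕ} (u : EuclideanSpace ℝ (Fin N) → ℝ)
    (x w₁ w₂ : EuclideanSpace ℝ (Fin N)) : ℝ :=
  fderiv ℝ (fun y => fderiv ℝ u y w₁) x w₂

/-- The Laplacian `Δu = tr Hess u`. -/
noncomputable def Lap {N : ℕ} (u : EuclideanSpace ℝ (Fin N) → ℝ)
    (x : EuclideanSpace ℝ (Fin N)) : ℝ :=
  ∑ i : Fin N, Hess u x (EuclideanSpace.single i 1) (EuclideanSpace.single i 1)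

/-- The normalized gradient `V = ∇u / ‖∇u‖` (junk value `0` where `∇u = 0`). -/
noncomputable def NGrad {N : ℕ} (u : EuclideanSpace ℝ (Fin N) → ℝ)
    (x : EuclideanSpace ℝ (Fin N)) : EuclideanSpace ℝ (Fin N) :=
  ‖gradient u x‖⁻¹ • gradient u x

/-- The squared Frobenius norm of a linear map on `ℝ^N`. -/
noncomputable def FrobSq {N : ℕ}
    (A : EuclideanSpace ℝ (Fin N) →L[ℝ] EuclideanSpace ℝ (Fin N)) : ℝ :=
  ∑ i : Fin N, ‖A (EuclideanSpace.single i 1)‖ ^ 2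

/-- The divergence `div Z = ∑ i ∂Zᵢ/∂xᵢ` of a vector field on `ℝ^N`. -/
noncomputable def Divg {N : ℕ} (Z : EuclideanSpace ℝ (Fin N) → EuclideanSpace ℝ (Fin N))
    (x : EuclideanSpace ℝ (Fin N)) : ℝ :=
  ∑ i : Fin N, ⟪fderiv ℝ Z x (EuclideanSpace.single i 1), EuclideanSpace.single i 1⟫

/-- The Frobenius inner product `⟨A, B⟩_F = ∑ᵢⱼ Aᵢⱼ Bᵢⱼ` of two linear maps on `ℝ^N`. -/
noncomputable def FrobInner {N : ℕ}
    (A B : EuclideanSpace ℝ (Fin N) →L[ℝ] EuclideanSpace ℝ (Fin N)) : ℝ :=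
  ∑ i : Fin N, ⟪A (EuclideanSpace.single i 1), B (EuclideanSpace.single i 1)⟫

/-!
Let `∇u x ≠ 0`. Since the direction of `∇u` is locally constant, `u` is locally invariant under
translation by vectors orthogonal to `∇u x`, hence so is `∇u`; a continuation argument then shows
that `∇u` is constant on the whole hyperplane through `x` orthogonal to `∇u x`. Two such
hyperplanes that are not parallel meet, and at a common point both gradients agree, a contradiction.
So all gradients are parallel to one unit vector `e`, and `u` depends on `⟪x, e⟫` only.
-/

section

open NormedSpace Topology
open scoped Gradient

lemma eventually_eq_of_hasFDerivAt_zero {G F : Type*} [NormedAddCommGroup G] [NormedSpace ℝ G]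
    [NormedAddCommGroup F] [NormedSpace ℝ F] {g : G → F} {s : Set G} (hs : IsOpen s)
    (hg : ∀ x ∈ s, HasFDerivAt g (0 : G →L[ℝ] F) x) {x : G} (hx : x ∈ s) :
    ∀ᶠ z in 𝓝 x, g z = g x := by
  have hopen : IsOpen (s ∩ g ⁻¹' {g x}) :=
    hs.isOpen_inter_preimage_of_fderiv_eq_zero
      (fun y hy => (hg y hy).differentiableAt.differentiableWithinAt)
      (fun y hy => (hg y hy).fderiv) {g x}
  filter_upwards [hopen.mem_nhds ⟨hx, rfl⟩] with z hz using hz.2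

variable {E : Type*} [NormedAddCommGroup E] [InnerProductSpace ℝ E]

lemma differentiableAt_normalize_comp {G : Type*} [NormedAddCommGroup G] [NormedSpace ℝ G]
    {g : G → E} {x : G} (hg : DifferentiableAt ℝ g x) (hx : g x ≠ 0) :
    DifferentiableAt ℝ (fun y => normalize (g y)) x :=
  ((hg.norm ℝ hx).inv (norm_ne_zero_iff.2 hx)).smul hg

lemma real_inner_normalize_left (a w : E) : ⟪normalize a, w⟫ = ‖a‖⁻¹ * ⟪a, w⟫ :=
  real_inner_smul_left a w ‖a‖⁻¹

lemma inner_eq_zero_of_normalize_eq {a b w : E} (hab : normalize b = normalize a)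
    (hw : ⟪a, w⟫ = 0) : ⟪b, w⟫ = 0 := by
  rw [← norm_smul_normalize b, hab, real_inner_smul_left, real_inner_normalize_left, hw, mul_zero,
    mul_zero]

/-- A vector field `X` that is constant, for each `x` with `X x ≠ 0`, on the hyperplane through `x`
orthogonal to `X x`. Zeros of `X` are excluded, since there the orthogonal space is all of `E`. -/
def ConstOnNormalHyperplanes (X : E → E) : Prop :=
  ∀ ⦃x w : E⦄, X x ≠ 0 → ⟪X x, w⟫ = 0 → X (x + w) = X x

namespace ConstOnNormalHyperplanes

variable {X : E → E}

lemma inner_eq_zero (hX : ConstOnNormalHyperplanes X) {x w : E} (hx : X x ≠ 0)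
    (hw : ⟪X x, w⟫ = 0) (y : E) : ⟪X y, w⟫ = 0 := by
  by_contra hyw
  have hy : X y ≠ 0 := fun h => hyw (by rw [h, inner_zero_left])
  -- The line `x + ℝ w` lies in the hyperplane through `x` and, by `hyw`, meets the one through `y`.
  obtain ⟨t, ht⟩ : ∃ t : ℝ, ⟪X y, x + t • w - y⟫ = 0 := by
    refine ⟨⟪X y, y - x⟫ / ⟪X y, w⟫, ?_⟩
    rw [add_sub_right_comm, inner_add_right, real_inner_smul_right, div_mul_cancel₀ _ hyw,
      ← inner_add_right, sub_add_sub_cancel, sub_self, inner_zero_right]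
  have hxp : X (x + t • w) = X x := hX hx (by rw [real_inner_smul_right, hw, mul_zero])
  have hyp : X (x + t • w) = X y := by simpa only [add_sub_cancel] using hX hy ht
  exact hyw (by rw [← hyp, hxp, hw])

lemma exists_norm_eq_one_forall_inner_eq_zero [Nontrivial E] (hX : ConstOnNormalHyperplanes X) :
    ∃ e : E, ‖e‖ = 1 ∧ ∀ x w, ⟪e, w⟫ = 0 → ⟪X x, w⟫ = 0 := by
  by_cases hzero : ∀ x, X x = 0
  · obtain ⟨e, he⟩ := exists_norm_eq E zero_le_one
    exact ⟨e, he, fun x w _ => by rw [hzero x, inner_zero_left]⟩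
  · obtain ⟨x₀, hx₀⟩ := not_forall.1 hzero
    exact ⟨normalize (X x₀), norm_normalize hx₀, fun x w hw =>
      hX.inner_eq_zero hx₀ (inner_eq_zero_of_normalize_eq (normalize_normalize _).symm hw) x⟩

end ConstOnNormalHyperplanes

variable [CompleteSpace E] {u : E → ℝ}

lemma contDiff_gradient {m n : WithTop ℕ∞} (hu : ContDiff ℝ n u) (hmn : m + 1 ≤ n) :
    ContDiff ℝ m (∇ u) :=
  (InnerProductSpace.toDual ℝ E).symm.contDiff.comp (hu.fderiv_right hmn)

lemma differentiableAt_normalize_gradient (hu : ContDiff ℝ 2 u) {x : E} (hx : ∇ u x ≠ 0) :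
    DifferentiableAt ℝ (fun y => normalize (∇ u y)) x :=
  differentiableAt_normalize_comp
    ((contDiff_gradient hu one_add_one_eq_two.le).differentiable one_ne_zero x) hx

lemma gradient_comp_add_right (u : E → ℝ) (a x : E) :
    ∇ (fun y => u (y + a)) x = ∇ u (x + a) := by
  rw [gradient, gradient, fderiv_comp_add_right]

lemma eq_of_inner_gradient_eq_zero {s : Set E} (hs : Convex ℝ s)
    (hu : ∀ z ∈ s, DifferentiableAt ℝ u z) {x y : E} (hx : x ∈ s) (hy : y ∈ s)
    (h : ∀ z ∈ s, ⟪∇ u z, y - x⟫ = 0) : u y = u x := by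
  obtain ⟨z, hz, hmvt⟩ :=
    domain_mvt (fun z hz => (hu z hz).hasFDerivAt.hasFDerivWithinAt) hs hx hy
  rw [← inner_gradient_left, h z (hs.segment_subset hx hy hz)] at hmvt
  exact sub_eq_zero.1 hmvt

lemma eventually_gradient_eq_of_inner_sub_eq_zero {x : E}
    (hu : ∀ᶠ z in 𝓝 x, DifferentiableAt ℝ u z)
    (hV : ∀ᶠ z in 𝓝 x, normalize (∇ u z) = normalize (∇ u x)) :
    ∀ᶠ z in 𝓝 x, ⟪∇ u x, z - x⟫ = 0 → ∇ u z = ∇ u x := by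
  obtain ⟨r, hr, hball⟩ := Metric.eventually_nhds_iff_ball.1 (hu.and hV)
  filter_upwards [Metric.ball_mem_nhds x (half_pos hr)] with z hz hperp
  have hinv : (fun p => u (p + (z - x))) =ᶠ[𝓝 x] u := by
    filter_upwards [Metric.ball_mem_nhds x (half_pos hr)] with p hp
    have hpz : p + (z - x) ∈ Metric.ball x r := by
      rw [mem_ball_iff_norm] at hp hz ⊢
      calc ‖p + (z - x) - x‖ = ‖(p - x) + (z - x)‖ := by rw [add_sub_right_comm]
        _ ≤ ‖p - x‖ + ‖z - x‖ := norm_add_le _ _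
        _ < r := by linarith
    refine eq_of_inner_gradient_eq_zero (convex_ball x r) (fun q hq => (hball q hq).1)
      (Metric.ball_subset_ball (half_le_self hr.le) hp) hpz fun q hq => ?_
    rw [add_sub_cancel_left]
    exact inner_eq_zero_of_normalize_eq (hball q hq).2 hperp
  rw [← hinv.gradient_eq, gradient_comp_add_right, add_sub_cancel]

lemma constOnNormalHyperplanes_gradient (hu : Differentiable ℝ u) (hcont : Continuous (∇ u))
    (hV : ∀ x, ∇ u x ≠ 0 → ∀ᶠ z in 𝓝 x, normalize (∇ u z) = normalize (∇ u x)) :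
    ConstOnNormalHyperplanes (∇ u) := by
  intro x w hx hw
  let γ : ℝ → E := fun t => x + t • w
  have hγ : Continuous γ := by fun_prop
  have hclosed : IsClosed {t | ∇ u (γ t) = ∇ u x} :=
    isClosed_eq (hcont.comp hγ) continuous_const
  have hopen : IsOpen {t | ∇ u (γ t) = ∇ u x} := by
    refine isOpen_iff_eventually.2 fun t (ht : ∇ u (γ t) = ∇ u x) => ?_
    have hloc := eventually_gradient_eq_of_inner_sub_eq_zero (.of_forall hu)
      (hV (γ t) (ht ▸ hx))
    filter_upwards [hγ.continuousAt.eventually hloc] with s hs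
    refine (hs ?_).trans ht
    rw [ht, add_sub_add_left_eq_sub, ← sub_smul, real_inner_smul_right, hw, mul_zero]
  have huniv := IsClopen.eq_univ ⟨hclosed, hopen⟩ ⟨0, by simp [γ]⟩
  simpa [γ] using huniv.ge (Set.mem_univ 1)

lemma eq_apply_inner_smul (hu : Differentiable ℝ u) {e : E} (he : ‖e‖ = 1)
    (hgrad : ∀ x w, ⟪e, w⟫ = 0 → ⟪∇ u x, w⟫ = 0) (x : E) : u x = u (⟪x, e⟫ • e) := by
  have hperp : ⟪e, x - ⟪x, e⟫ • e⟫ = 0 := by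
    rw [inner_sub_right, real_inner_smul_right, inner_self_eq_one_of_norm_eq_one he, mul_one,
      real_inner_comm, sub_self]
  exact eq_of_inner_gradient_eq_zero convex_univ (fun z _ => hu z) (Set.mem_univ _)
    (Set.mem_univ _) fun z _ => hgrad z _ hperp

theorem statement0_general [Nontrivial E] {n : WithTop ℕ∞} (hn : 1 ≤ n) (hu : ContDiff ℝ n u)
    (hDV : ∀ x, ∇ u x ≠ 0 → HasFDerivAt (fun y => normalize (∇ u y)) (0 : E →L[ℝ] E) x) :
    ∃ e : E, ‖e‖ = 1 ∧ ∃ h : ℝ → ℝ, ContDiff ℝ n h ∧ ∀ x, u x = h ⟪x, e⟫ := by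
  have hdiff : Differentiable ℝ u := hu.differentiable (one_pos.trans_le hn).ne'
  have hcont : Continuous (∇ u) := (contDiff_gradient (m := 0) hu (by simpa using hn)).continuous
  have hV : ∀ x, ∇ u x ≠ 0 → ∀ᶠ z in 𝓝 x, normalize (∇ u z) = normalize (∇ u x) :=
    fun x hx => eventually_eq_of_hasFDerivAt_zero (isOpen_ne_fun hcont continuous_const) hDV hx
  obtain ⟨e, he, hgrad⟩ :=
    (constOnNormalHyperplanes_gradient hdiff hcont hV).exists_norm_eq_one_forall_inner_eq_zero
  exact ⟨e, he, fun t => u (t • e), hu.comp (by fun_prop), eq_apply_inner_smul hdiff he hgrad⟩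

end

/-- If `u` is a nonconstant `C³` solution of `Δu + f(u) = 0` on `ℝ^N`
whose normalized gradient `V = ∇u/‖∇u‖` has vanishing derivative on `U = {∇u ≠ 0}`,
then `u` is one-dimensional: `u(x) = h(⟨x, e⟩)` for a unit vector `e` and a `C²` profile `h`. -/
theorem statement0 {N : ℕ} (hN : 1 ≤ N) (f : ℝ → ℝ) (hf : ContDiff ℝ 1 f)
    (u : EuclideanSpace ℝ (Fin N) → ℝ) (hu : ContDiff ℝ 3 u)
    (hnc : ∃ x y, u x ≠ u y)
    (hpde : ∀ x, Lap u x + f (u x) = 0)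
    (hDV : ∀ x, gradient u x ≠ 0 → fderiv ℝ (NGrad u) x = 0) :
    ∃ e : EuclideanSpace ℝ (Fin N), ‖e‖ = 1 ∧
      ∃ h : ℝ → ℝ, ContDiff ℝ 2 h ∧ ∀ x, u x = h ⟪x, e⟫ := by
  obtain ⟨x, y, hxy⟩ := hnc
  have : Nontrivial (EuclideanSpace ℝ (Fin N)) := ⟨x, y, ne_of_apply_ne u hxy⟩
  have hu₂ : ContDiff ℝ 2 u := hu.of_le (by norm_num)
  exact statement0_general one_le_two hu₂ fun z hz =>
    hDV z hz ▸ (differentiableAt_normalize_gradient hu₂ hz).hasFDerivAt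
end

section
/- Let N ≥ 1, let L₁, …, L_N > 0, let f : ℝ → ℝ be continuously differentiable, and let u : ℝ^N → ℝ be a nonconstant C³ function that is periodic with periods L_i in each coordinate direction (u(x + L_i e_i) = u(x) for all x and each standard basis vector e_i) and satisfies Δu + f(u) = 0 on ℝ^N. Then u is weakly unstable: there exists a Lipschitz function φ : ℝ^N → ℝ, periodic with the same periods, such that ∫_Q ( ‖∇φ(x)‖² − f'(u(x)) φ(x)² ) dx < 0, where Q = [0,L₁) × ⋯ × [0,L_N) and ∇φ denotes the almost-everywhere defined derivative of φ. -/
open RealInnerProductSpace MeasureTheory Filter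

/-!
Some directional derivative `v` of `u` does not vanish identically. It has mean zero, hence takes
both signs, and it solves the linearised equation `Δv + f'(u) v = 0`, so `v⁺` is a subsolution.
Integrating by parts, `φ = v⁺ + t η` with `t > 0` and `η > 0` therefore satisfies
`∫ (‖∇φ‖² - f'(u) φ²) = -∫ φ (Δφ + f'(u) φ) ≤ -t ∫ φ (Δη + f'(u) η)`,
which is negative for small `t` if `Δη + f'(u) η > 0` wherever `v > 0`. Such a periodic `η` exists
because `{v ≥ 0}` is not the whole torus: if `v a < 0`, a periodic sum of exponentials built from
the functions `cos (π (xᵢ - aᵢ) / Lᵢ)` has a Laplacian that dominates any multiple of it away from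
the lattice translates of `a`. To stay with `C²` test functions, `v⁺` is replaced by the hyperbola
`(v + √(v² + t⁴)) / 2`; the subsolution property then fails only by `O(t²)`.
-/

open Function InnerProductSpace Laplacian Pointwise Topology

section Periodic

variable {ι E F : Type*} [NormedAddCommGroup E] [NormedSpace ℝ E] {b : Module.Basis ι ℝ E}

lemma periodic_of_mem_span {α : Type*} {g : E → α} (hg : ∀ i, Periodic g (b i)) {c : E}
    (hc : c ∈ Submodule.span ℤ (Set.range b)) : Periodic g c := by
  induction hc using Submodule.span_induction with
  | mem _ h => obtain ⟨i, rfl⟩ := h; exact hg i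
  | zero => exact fun x => by rw [add_zero]
  | add _ _ _ _ h₁ h₂ => exact h₁.add_period h₂
  | smul n _ _ h => exact h.zsmul n

lemma isCompact_range_of_forall_periodic [Finite ι] [FiniteDimensional ℝ E] {α : Type*}
    [TopologicalSpace α] {g : E → α} (hg : ∀ i, Periodic g (b i)) (hgc : Continuous g) :
    IsCompact (Set.range g) :=
  IsZLattice.isCompact_range_of_periodic (Submodule.span ℤ (Set.range b)) g hgc
    fun z _ hw => periodic_of_mem_span hg hw z

lemma exists_norm_le_of_forall_periodic [Finite ι] [FiniteDimensional ℝ E]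
    [SeminormedAddCommGroup F] {g : E → F} (hg : ∀ i, Periodic g (b i)) (hgc : Continuous g) :
    ∃ C, ∀ x, ‖g x‖ ≤ C := by
  obtain ⟨C, hC⟩ := (isCompact_range_of_forall_periodic hg hgc).isBounded.exists_norm_le
  exact ⟨C, fun x => hC _ ⟨x, rfl⟩⟩

lemma exists_pos_forall_le_of_forall_periodic [Finite ι] [FiniteDimensional ℝ E] {g h : E → ℝ}
    (hg : ∀ i, Periodic g (b i)) (hh : ∀ i, Periodic h (b i)) (hgc : Continuous g)
    (hhc : Continuous h) (hpos : ∀ x, 0 ≤ g x → 0 < h x) :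
    ∃ δ > 0, ∀ x, 0 ≤ g x → δ ≤ h x := by
  have hpair : ∀ i, Periodic (fun x => (g x, h x)) (b i) := fun i x =>
    Prod.ext (hg i x) (hh i x)
  have hcompact : IsCompact (Set.range (fun x => (g x, h x)) ∩ {p | 0 ≤ p.1}) :=
    (isCompact_range_of_forall_periodic hpair (hgc.prodMk hhc)).inter_right
      (isClosed_le continuous_const continuous_fst)
  obtain ⟨δ, hδ, hle⟩ := hcompact.exists_forall_le' (a := 0) continuous_snd.continuousOn (by
    rintro _ ⟨⟨x, rfl⟩, hx⟩
    exact hpos x hx)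
  exact ⟨δ, hδ, fun x hx => hle _ ⟨⟨x, rfl⟩, hx⟩⟩

lemma periodic_fderiv [NormedAddCommGroup F] [NormedSpace ℝ F] {g : E → F} {c : E}
    (hg : Periodic g c) : Periodic (fderiv ℝ g) c := fun x => by
  rw [← fderiv_comp_add_right, hg.funext]

lemma exists_lipschitzWith_of_forall_periodic [Finite ι] [FiniteDimensional ℝ E]
    [NormedAddCommGroup F] [NormedSpace ℝ F] {g : E → F} (hg : ∀ i, Periodic g (b i))
    (hgc : ContDiff ℝ 1 g) : ∃ K, LipschitzWith K g := by
  obtain ⟨C, hC⟩ := exists_norm_le_of_forall_periodic (fun i => periodic_fderiv (hg i))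
    (hgc.continuous_fderiv one_ne_zero)
  exact ⟨C.toNNReal, lipschitzWith_of_nnnorm_fderiv_le (hgc.differentiable one_ne_zero)
    fun x => NNReal.le_toNNReal_of_coe_le (hC x)⟩

variable [MeasurableSpace E] [BorelSpace E] (μ : Measure E) [μ.IsAddHaarMeasure] [Finite ι]
  [FiniteDimensional ℝ E] [NormedAddCommGroup F]

lemma integrableOn_fundamentalDomain {g : E → F} (hg : Continuous g) :
    IntegrableOn g (ZSpan.fundamentalDomain b) μ :=
  (hg.continuousOn.integrableOn_compact
    (ZSpan.fundamentalDomain_isBounded b).isCompact_closure).mono_set subset_closure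

variable [NormedSpace ℝ F]

lemma setIntegral_fundamentalDomain_add_right {g : E → F} (hg : ∀ i, Periodic g (b i)) (c : E) :
    ∫ x in ZSpan.fundamentalDomain b, g (x + c) ∂μ = ∫ x in ZSpan.fundamentalDomain b, g x ∂μ := by
  have : Countable (Submodule.span ℤ (Set.range b)).toAddSubgroup :=
    inferInstanceAs (Countable (Submodule.span ℤ (Set.range b)))
  have hdom := ZSpan.isAddFundamentalDomain' b μ
  have hinv (z : (Submodule.span ℤ (Set.range b)).toAddSubgroup) (x : E) : g (z +ᵥ x) = g x := by
    rw [AddSubgroup.vadd_def, vadd_eq_add, add_comm, periodic_of_mem_span hg z.2]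
  rw [hdom.setIntegral_eq (hdom.vadd_of_comm c) hinv, ← Set.image_vadd,
    (measurePreserving_vadd c μ).setIntegral_image_emb (measurableEmbedding_const_vadd c)]
  simp only [vadd_eq_add, add_comm]

lemma setIntegral_fundamentalDomain_fderiv_apply {g : E → F} (hg : ∀ i, Periodic g (b i))
    (hgc : ContDiff ℝ 1 g) (c : E) :
    ∫ x in ZSpan.fundamentalDomain b, fderiv ℝ g x c ∂μ = 0 := by
  have hderiv (x : E) (s : ℝ) :
      HasDerivAt (fun s : ℝ => g (x + s • c)) (fderiv ℝ g (x + s • c) c) s := by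
    have hline : HasDerivAt (fun s : ℝ => x + s • c) c s := by
      simpa using ((hasDerivAt_id s).smul_const c).const_add x
    exact (hgc.differentiable one_ne_zero _).hasFDerivAt.comp_hasDerivAt s hline
  have hcont : Continuous fun x => fderiv ℝ g x c :=
    (hgc.continuous_fderiv one_ne_zero).clm_apply continuous_const
  obtain ⟨C, hC⟩ := exists_norm_le_of_forall_periodic
    (fun i => (periodic_fderiv (hg i)).comp fun A => A c) hcont
  have hint := (hasDerivAt_integral_of_dominated_loc_of_deriv_le
    (μ := μ.restrict (ZSpan.fundamentalDomain b)) (x₀ := 0)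
    (F := fun (s : ℝ) x => g (x + s • c)) (F' := fun s x => fderiv ℝ g (x + s • c) c)
    univ_mem
    (.of_forall fun s => (integrableOn_fundamentalDomain μ
      (hgc.continuous.comp (continuous_add_const (s • c)))).aestronglyMeasurable)
    (integrableOn_fundamentalDomain μ (hgc.continuous.comp (continuous_add_const ((0 : ℝ) • c))))
    (integrableOn_fundamentalDomain μ
      (hcont.comp (continuous_add_const ((0 : ℝ) • c)))).aestronglyMeasurable
    (.of_forall fun x s _ => hC (x + s • c))
    (integrableOn_fundamentalDomain μ continuous_const)
    (.of_forall fun x s _ => hderiv x s)).2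
  simp only [setIntegral_fundamentalDomain_add_right μ hg] at hint
  simpa using hint.unique (hasDerivAt_const _ _)

lemma setIntegral_fundamentalDomain_pos {g : E → ℝ} (hg : ∀ i, Periodic g (b i))
    (hgc : Continuous g) (hg0 : ∀ x, 0 ≤ g x) (hpos : ∃ x, 0 < g x) :
    0 < ∫ x in ZSpan.fundamentalDomain b, g x ∂μ := by
  have : Countable (Submodule.span ℤ (Set.range b)).toAddSubgroup :=
    inferInstanceAs (Countable (Submodule.span ℤ (Set.range b)))
  rw [setIntegral_pos_iff_support_of_nonneg_ae (.of_forall hg0)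
    (integrableOn_fundamentalDomain μ hgc), pos_iff_ne_zero]
  intro hzero
  have hinv (z : (Submodule.span ℤ (Set.range b)).toAddSubgroup) :
      z +ᵥ support g = support g := by
    ext x
    rw [Set.mem_vadd_set_iff_neg_vadd_mem, AddSubgroup.vadd_def, vadd_eq_add, add_comm,
      mem_support, mem_support, periodic_of_mem_span hg (-z).2]
  have hsupp : μ (support g) = 0 :=
    (ZSpan.isAddFundamentalDomain' b μ).measure_zero_of_invariant _ hinv hzero
  exact (hgc.isOpen_support.measure_pos μ (hpos.imp fun _ h => h.ne')).ne' hsupp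

lemma exists_pos_of_setIntegral_fundamentalDomain_eq_zero {g : E → ℝ}
    (hg : ∀ i, Periodic g (b i)) (hgc : Continuous g) (hne : ∃ x, g x ≠ 0)
    (hint : ∫ x in ZSpan.fundamentalDomain b, g x ∂μ = 0) : ∃ x, 0 < g x := by
  by_contra! hle
  have := setIntegral_fundamentalDomain_pos μ (g := fun x => -g x)
    (fun i => (hg i).comp Neg.neg) hgc.neg (fun x => neg_nonneg.2 (hle x))
    (hne.imp fun x hx => neg_pos.2 ((hle x).lt_of_ne hx))
  rw [integral_neg, hint, neg_zero] at this
  exact this.false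

lemma exists_neg_of_setIntegral_fundamentalDomain_eq_zero {g : E → ℝ}
    (hg : ∀ i, Periodic g (b i)) (hgc : Continuous g) (hne : ∃ x, g x ≠ 0)
    (hint : ∫ x in ZSpan.fundamentalDomain b, g x ∂μ = 0) : ∃ x, g x < 0 := by
  simpa using exists_pos_of_setIntegral_fundamentalDomain_eq_zero μ (g := fun x => -g x)
    (fun i => (hg i).comp Neg.neg) hgc.neg (by simpa using hne)
    (by rw [integral_neg, hint, neg_zero])

lemma continuous_setIntegral_fundamentalDomain {X : Type*} [TopologicalSpace X]
    [FirstCountableTopology X] [LocallyCompactSpace X] {G : X → E → F}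
    (hG : Continuous (uncurry G)) :
    Continuous fun t => ∫ x in ZSpan.fundamentalDomain b, G t x ∂μ := by
  have := Fintype.ofFinite ι
  simp only [setIntegral_congr_set (ZSpan.fundamentalDomain_ae_parallelepiped b μ)]
  exact continuous_parametric_integral_of_continuous hG b.parallelepiped.isCompact

end Periodic

section Laplacian

variable {ι E F : Type*} [NormedAddCommGroup E] [NormedAddCommGroup F] [NormedSpace ℝ F]

lemma contDiff_fderiv_apply [NormedSpace ℝ E] {m n : WithTop ℕ∞} {w : E → F} (hw : ContDiff ℝ n w)
    (hmn : m + 1 ≤ n) (c : E) : ContDiff ℝ m fun x => fderiv ℝ w x c :=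
  (hw.fderiv_right hmn).clm_apply contDiff_const

lemma fderiv_fderiv_apply_comm [NormedSpace ℝ E] {w : E → F} (hw : ContDiff ℝ 2 w) (x c d : E) :
    fderiv ℝ (fun y => fderiv ℝ w y c) x d = fderiv ℝ (fun y => fderiv ℝ w y d) x c := by
  have hdiff : DifferentiableAt ℝ (fderiv ℝ w) x :=
    (hw.fderiv_right (m := 1) one_add_one_eq_two.le).differentiable one_ne_zero x
  have hsymm : IsSymmSndFDerivAt ℝ w x := hw.contDiffAt.isSymmSndFDerivAt (by simp)
  simpa [fderiv_clm_apply hdiff] using hsymm d c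

variable [InnerProductSpace ℝ E]

lemma continuous_gradient [CompleteSpace E] {w : E → ℝ} (hw : ContDiff ℝ 1 w) :
    Continuous (gradient w) :=
  (toDual ℝ E).symm.continuous.comp (hw.continuous_fderiv one_ne_zero)

variable [FiniteDimensional ℝ E]

lemma laplacian_eq_sum_fderiv_fderiv [Fintype ι] (e : OrthonormalBasis ι ℝ E) {w : E → F}
    (hw : ContDiff ℝ 2 w) (x : E) :
    Δ w x = ∑ i, fderiv ℝ (fun y => fderiv ℝ w y (e i)) x (e i) := by
  have hdiff : DifferentiableAt ℝ (fderiv ℝ w) x :=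
    (hw.fderiv_right (m := 1) one_add_one_eq_two.le).differentiable one_ne_zero x
  simp [laplacian_eq_iteratedFDeriv_orthonormalBasis w e, iteratedFDeriv_two_apply,
    fderiv_clm_apply hdiff]

lemma laplacian_fun_sum {J : Type*} {s : Finset J} {w : J → E → F}
    (hw : ∀ j ∈ s, ContDiff ℝ 2 (w j)) (x : E) :
    Δ (fun y => ∑ j ∈ s, w j y) x = ∑ j ∈ s, Δ (w j) x := by
  simp only [laplacian_eq_iteratedFDeriv_stdOrthonormalBasis]
  rw [iteratedFDeriv_fun_sum_apply fun j hj => (hw j hj).contDiffAt, Finset.sum_comm]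
  simp

lemma continuous_laplacian {w : E → F} (hw : ContDiff ℝ 2 w) : Continuous (Δ w) := by
  rw [laplacian_eq_iteratedFDeriv_stdOrthonormalBasis]
  exact continuous_finsetSum _ fun i _ =>
    (hw.continuous_iteratedFDeriv' (m := 2)).eval_const _

lemma periodic_laplacian {w : E → F} {c : E} (hw : Periodic w c) : Periodic (Δ w) c := fun x => by
  simp only [laplacian_eq_iteratedFDeriv_stdOrthonormalBasis, ← iteratedFDeriv_comp_add_right,
    hw.funext]

lemma sum_sq_fderiv_apply [Fintype ι] (e : OrthonormalBasis ι ℝ E) (w : E → ℝ) (x : E) :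
    ∑ i, fderiv ℝ w x (e i) ^ 2 = ‖gradient w x‖ ^ 2 := by
  simp only [← e.sum_sq_norm_inner_left, inner_gradient_left, Real.norm_eq_abs, sq_abs]

lemma laplacian_comp {g : ℝ → ℝ} (hg : ContDiff ℝ 2 g) {w : E → ℝ} (hw : ContDiff ℝ 2 w) (x : E) :
    Δ (fun y => g (w y)) x =
      deriv (deriv g) (w x) * ‖gradient w x‖ ^ 2 + deriv g (w x) * Δ w x := by
  let e := stdOrthonormalBasis ℝ E
  have hg' : ContDiff ℝ 1 (deriv g) := contDiff_fderiv_apply hg one_add_one_eq_two.le 1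
  have hfderiv {h : ℝ → ℝ} (hh : ContDiff ℝ 1 h) (y : E) :
      HasFDerivAt (fun z => h (w z)) (deriv h (w y) • fderiv ℝ w y) y :=
    (hh.differentiable one_ne_zero _).hasDerivAt.comp_hasFDerivAt y
      (hw.differentiable two_ne_zero y).hasFDerivAt
  have hw' (c : E) : HasFDerivAt (fun y => fderiv ℝ w y c)
      (fderiv ℝ (fun y => fderiv ℝ w y c) x) x :=
    ((contDiff_fderiv_apply hw one_add_one_eq_two.le c).differentiable one_ne_zero x).hasFDerivAt
  have hterm (c : E) : fderiv ℝ (fun y => fderiv ℝ (fun z => g (w z)) y c) x c =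
      deriv (deriv g) (w x) * fderiv ℝ w x c ^ 2 +
        deriv g (w x) * fderiv ℝ (fun y => fderiv ℝ w y c) x c := by
    simp only [(hfderiv (hg.of_le one_le_two) _).fderiv, smul_apply, smul_eq_mul]
    rw [((hfderiv hg' x).fun_mul (hw' c)).fderiv]
    simp only [add_apply, smul_apply, smul_eq_mul]
    ring
  simp only [laplacian_eq_sum_fderiv_fderiv e (hg.fun_comp hw), hterm,
    laplacian_eq_sum_fderiv_fderiv e hw, ← sum_sq_fderiv_apply e w, Finset.sum_add_distrib,
    Finset.mul_sum]

lemma laplacian_fderiv_apply {w : E → F} (hw : ContDiff ℝ 3 w) (x c : E) :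
    Δ (fun y => fderiv ℝ w y c) x = fderiv ℝ (Δ w) x c := by
  let e := stdOrthonormalBasis ℝ E
  have hw2 : ContDiff ℝ 2 w := hw.of_le (by norm_num)
  have hw' (d : E) : ContDiff ℝ 2 fun y => fderiv ℝ w y d :=
    contDiff_fderiv_apply hw (by norm_num) d
  have hw'' (d : E) : Differentiable ℝ fun z => fderiv ℝ (fun y => fderiv ℝ w y d) z d :=
    (contDiff_fderiv_apply (hw' d) one_add_one_eq_two.le d).differentiable one_ne_zero
  rw [laplacian_eq_sum_fderiv_fderiv e (hw' c), funext (laplacian_eq_sum_fderiv_fderiv e hw2),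
    fderiv_fun_sum fun i _ => hw'' (e i) x, sum_apply]
  refine Finset.sum_congr rfl fun i _ => ?_
  rw [funext fun y => fderiv_fderiv_apply_comm hw2 y c (e i),
    fderiv_fderiv_apply_comm (hw' (e i))]

variable [MeasurableSpace E] [BorelSpace E] (μ : Measure E) [μ.IsAddHaarMeasure] [Finite ι]
  {b : Module.Basis ι ℝ E}

lemma setIntegral_fundamentalDomain_laplacian {w : E → F} (hw : ∀ i, Periodic w (b i))
    (hwc : ContDiff ℝ 2 w) : ∫ x in ZSpan.fundamentalDomain b, Δ w x ∂μ = 0 := by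
  let e := stdOrthonormalBasis ℝ E
  have hw' (j) : ContDiff ℝ 1 fun y => fderiv ℝ w y (e j) :=
    contDiff_fderiv_apply hwc one_add_one_eq_two.le (e j)
  simp only [laplacian_eq_sum_fderiv_fderiv e hwc]
  rw [integral_finsetSum _ fun j _ => integrableOn_fundamentalDomain μ
    (contDiff_fderiv_apply (m := 0) (hw' j) (zero_add 1).le (e j)).continuous]
  exact Finset.sum_eq_zero fun j _ => setIntegral_fundamentalDomain_fderiv_apply μ
    (fun i => (periodic_fderiv (hw i)).comp fun A => A (e j)) (hw' j) (e j)

lemma setIntegral_fundamentalDomain_norm_gradient_sq {w : E → ℝ} (hw : ∀ i, Periodic w (b i))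
    (hwc : ContDiff ℝ 2 w) :
    ∫ x in ZSpan.fundamentalDomain b, ‖gradient w x‖ ^ 2 ∂μ =
      -∫ x in ZSpan.fundamentalDomain b, w x * Δ w x ∂μ := by
  have hsq (x : E) : Δ (fun y => w y ^ 2) x = 2 * (‖gradient w x‖ ^ 2 + w x * Δ w x) := by
    have hderiv : deriv (fun s : ℝ => s ^ 2) = fun s => 2 * s := by ext s; simp
    have hderiv' : deriv (fun s : ℝ => 2 * s) = fun _ => 2 := by ext s; simp
    rw [laplacian_comp (g := (· ^ 2)) (contDiff_id.pow 2) hwc, hderiv, hderiv']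
    ring
  have hzero := setIntegral_fundamentalDomain_laplacian μ (fun i => (hw i).comp (· ^ 2))
    (hwc.pow 2)
  simp only [comp_def, hsq, integral_const_mul] at hzero
  rw [integral_add] at hzero
  · linarith
  · exact integrableOn_fundamentalDomain μ
      ((continuous_gradient (hwc.of_le one_le_two)).norm.pow 2)
  · exact integrableOn_fundamentalDomain μ (hwc.continuous.mul (continuous_laplacian hwc))

end Laplacian

section SoftPosPart

/-- The hyperbola `(s + √(s² + d²)) / 2`, a convex approximation of the positive part of `s`,
smooth for `d ≠ 0` and equal to `max s 0` for `d = 0`. -/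
noncomputable def softPosPart (d s : ℝ) : ℝ := (s + √(s ^ 2 + d ^ 2)) / 2

variable {d : ℝ}

lemma continuous_softPosPart : Continuous (uncurry softPosPart) := by
  unfold uncurry softPosPart
  fun_prop

lemma softPosPart_zero (s : ℝ) : softPosPart 0 s = max s 0 := by
  rw [softPosPart, zero_pow two_ne_zero, add_zero, Real.sqrt_sq_eq_abs]
  rcases le_total s 0 with hs | hs
  · rw [abs_of_nonpos hs, max_eq_right hs, add_neg_cancel, zero_div]
  · rw [abs_of_nonneg hs, max_eq_left hs, add_self_div_two]

lemma softPosPart_nonneg (d s : ℝ) : 0 ≤ softPosPart d s := by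
  have : -s ≤ √(s ^ 2 + d ^ 2) :=
    (neg_le_abs s).trans (Real.abs_le_sqrt (le_add_of_nonneg_right (sq_nonneg d)))
  unfold softPosPart
  linarith

lemma contDiff_softPosPart (hd : d ≠ 0) {n : WithTop ℕ∞} : ContDiff ℝ n (softPosPart d) := by
  unfold softPosPart
  have (s : ℝ) : s ^ 2 + d ^ 2 ≠ 0 := by positivity
  fun_prop (disch := assumption)

lemma hasDerivAt_sqrt_sq_add_sq (hd : d ≠ 0) (s : ℝ) :
    HasDerivAt (fun s => √(s ^ 2 + d ^ 2)) (s / √(s ^ 2 + d ^ 2)) s := by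
  have := ((hasDerivAt_pow 2 s).add_const (d ^ 2)).sqrt (by positivity)
  simpa [mul_div_mul_left] using this

lemma deriv_softPosPart (hd : d ≠ 0) :
    deriv (softPosPart d) = fun s => (1 + s / √(s ^ 2 + d ^ 2)) / 2 :=
  funext fun s => (((hasDerivAt_id s).add (hasDerivAt_sqrt_sq_add_sq hd s)).div_const 2).deriv

lemma deriv_deriv_softPosPart_nonneg (hd : d ≠ 0) (s : ℝ) :
    0 ≤ deriv (deriv (softPosPart d)) s := by
  have hq : 0 < √(s ^ 2 + d ^ 2) := by positivity
  have h := ((((hasDerivAt_id s).fun_div (hasDerivAt_sqrt_sq_add_sq hd s) hq.ne').const_add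
    1).div_const 2).deriv
  simp only [id] at h
  have hle : s * (s / √(s ^ 2 + d ^ 2)) ≤ √(s ^ 2 + d ^ 2) := by
    rw [← mul_div_assoc, div_le_iff₀ hq, Real.mul_self_sqrt (by positivity)]
    linarith [sq_nonneg d]
  rw [deriv_softPosPart hd, h, one_mul]
  exact div_nonneg (div_nonneg (sub_nonneg.2 hle) (sq_nonneg _)) zero_le_two

lemma abs_softPosPart_sub_mul_deriv_le (hd : d ≠ 0) (s : ℝ) :
    |softPosPart d s - s * deriv (softPosPart d) s| ≤ |d| / 2 := by
  have hq : 0 < √(s ^ 2 + d ^ 2) := by positivity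
  have hsq : √(s ^ 2 + d ^ 2) ^ 2 = s ^ 2 + d ^ 2 := Real.sq_sqrt (by positivity)
  have heq : softPosPart d s - s * deriv (softPosPart d) s = |d| * |d| / √(s ^ 2 + d ^ 2) / 2 := by
    rw [deriv_softPosPart hd, softPosPart]
    field_simp
    rw [sq_abs]
    linear_combination hsq
  have hdq : |d| ≤ √(s ^ 2 + d ^ 2) := Real.abs_le_sqrt (le_add_of_nonneg_left (sq_nonneg s))
  rw [heq, abs_of_nonneg (by positivity)]
  gcongr
  rw [div_le_iff₀ hq]
  gcongr

variable {E : Type*} [NormedAddCommGroup E] [InnerProductSpace ℝ E] [FiniteDimensional ℝ E]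
  {v η : E → ℝ} {x : E} {k K : ℝ}

lemma neg_le_laplacian_softPosPart_add_mul (hv : ContDiff ℝ 2 v) (hd : d ≠ 0) (hk : |k| ≤ K)
    (hvk : Δ v x + k * v x = 0) :
    -(K * (|d| / 2)) ≤ Δ (fun y => softPosPart d (v y)) x + k * softPosPart d (v x) := by
  have heq : Δ (fun y => softPosPart d (v y)) x + k * softPosPart d (v x) =
      deriv (deriv (softPosPart d)) (v x) * ‖gradient v x‖ ^ 2 +
        k * (softPosPart d (v x) - v x * deriv (softPosPart d) (v x)) := by
    rw [laplacian_comp (contDiff_softPosPart hd) hv]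
    linear_combination deriv (softPosPart d) (v x) * hvk
  have hconv := mul_nonneg (deriv_deriv_softPosPart_nonneg hd (v x)) (sq_nonneg ‖gradient v x‖)
  have hbound :
      |k * (softPosPart d (v x) - v x * deriv (softPosPart d) (v x))| ≤ K * (|d| / 2) := by
    rw [abs_mul]
    exact mul_le_mul hk (abs_softPosPart_sub_mul_deriv_le hd _) (abs_nonneg _)
      ((abs_nonneg k).trans hk)
  linarith [neg_le_of_abs_le hbound]

lemma mul_le_laplacian_softPosPart_add_mul (hv : ContDiff ℝ 2 v) (hη : ContDiff ℝ 2 η) {t : ℝ}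
    (ht : 0 < t) (hk : |k| ≤ K) (hvk : Δ v x + k * v x = 0) :
    t * (Δ η x + k * η x - K / 2 * t) ≤
      Δ (fun y => softPosPart (t ^ 2) (v y) + t * η y) x +
        k * (softPosPart (t ^ 2) (v x) + t * η x) := by
  have hd : t ^ 2 ≠ 0 := by positivity
  have hadd : Δ (fun y => softPosPart (t ^ 2) (v y) + t * η y) x =
      Δ (fun y => softPosPart (t ^ 2) (v y)) x + t * Δ η x := by
    rw [← smul_eq_mul t, ← laplacian_smul t hη.contDiffAt]
    exact (((contDiff_softPosPart hd).comp hv).contDiffAt).laplacian_add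
      (hη.contDiffAt.const_smul t)
  have hsoft := neg_le_laplacian_softPosPart_add_mul hv hd hk hvk
  rw [abs_of_pos (by positivity)] at hsoft
  rw [hadd]
  linarith

end SoftPosPart

section SecondVariation

variable {ι E : Type*} [NormedAddCommGroup E] [InnerProductSpace ℝ E] [FiniteDimensional ℝ E]
  [MeasurableSpace E] (μ : Measure E) (b : Module.Basis ι ℝ E)

/-- The quadratic form `∫ (‖∇φ‖² - c φ²)` over a fundamental cell of the lattice spanned by `b`:
for `c = f' ∘ u` it is the second variation of the energy at `u` in the direction `φ`. -/
noncomputable def secondVariation (c φ : E → ℝ) : ℝ :=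
  ∫ x in ZSpan.fundamentalDomain b, (‖gradient φ x‖ ^ 2 - c x * φ x ^ 2) ∂μ

variable [BorelSpace E] [μ.IsAddHaarMeasure] [Finite ι] {b} {c v η : E → ℝ}

lemma secondVariation_eq_neg_setIntegral {φ : E → ℝ} (hc : Continuous c)
    (hφ : ContDiff ℝ 2 φ) (hφp : ∀ i, Periodic φ (b i)) :
    secondVariation μ b c φ =
      -∫ x in ZSpan.fundamentalDomain b, φ x * (Δ φ x + c x * φ x) ∂μ := by
  have hφΔ := integrableOn_fundamentalDomain (b := b) μ
    (hφ.continuous.fun_mul (continuous_laplacian hφ))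
  have hcφ := integrableOn_fundamentalDomain (b := b) μ (hc.fun_mul (hφ.continuous.fun_pow 2))
  have hgrad := integrableOn_fundamentalDomain (b := b) μ
    ((continuous_gradient (hφ.of_le one_le_two)).norm.fun_pow 2)
  rw [secondVariation, integral_sub hgrad hcφ,
    setIntegral_fundamentalDomain_norm_gradient_sq μ hφp hφ, ← neg_add', ← integral_add hφΔ hcφ]
  simp only [mul_add, sq, mul_left_comm (c _)]

lemma secondVariation_softPosPart_add_mul_le (hc : Continuous c) {K : ℝ} (hK : ∀ x, |c x| ≤ K)
    (hv : ContDiff ℝ 2 v) (hvp : ∀ i, Periodic v (b i)) (hvc : ∀ x, Δ v x + c x * v x = 0)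
    (hη : ContDiff ℝ 2 η) (hηp : ∀ i, Periodic η (b i)) (hη0 : ∀ x, 0 ≤ η x) {t : ℝ}
    (ht : 0 < t) :
    secondVariation μ b c (fun x => softPosPart (t ^ 2) (v x) + t * η x) ≤
      -(t * ∫ x in ZSpan.fundamentalDomain b,
        (softPosPart (t ^ 2) (v x) + t * η x) * (Δ η x + c x * η x - K / 2 * t) ∂μ) := by
  have hφ : ContDiff ℝ 2 fun x => softPosPart (t ^ 2) (v x) + t * η x :=
    ((contDiff_softPosPart (by positivity)).comp hv).add (contDiff_const.mul hη)
  have hΔη := continuous_laplacian hη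
  have hΔφ := continuous_laplacian hφ
  have hφc := hφ.continuous
  have hηc := hη.continuous
  rw [secondVariation_eq_neg_setIntegral μ hc hφ fun i =>
    ((hvp i).comp (softPosPart (t ^ 2))).add ((hηp i).comp (t * ·)), ← integral_const_mul,
    neg_le_neg_iff]
  refine integral_mono (integrableOn_fundamentalDomain μ (by fun_prop))
    (integrableOn_fundamentalDomain μ (by fun_prop)) fun x => ?_
  have hφ0 : 0 ≤ softPosPart (t ^ 2) (v x) + t * η x :=
    add_nonneg (softPosPart_nonneg _ _) (mul_nonneg ht.le (hη0 x))
  rw [mul_left_comm]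
  exact mul_le_mul_of_nonneg_left
    (mul_le_laplacian_softPosPart_add_mul hv hη ht (hK x) (hvc x)) hφ0

theorem exists_secondVariation_neg_of_laplacian_add_mul_pos (hc : Continuous c)
    (hcp : ∀ i, Periodic c (b i)) (hv : ContDiff ℝ 2 v) (hvp : ∀ i, Periodic v (b i))
    (hvc : ∀ x, Δ v x + c x * v x = 0) (hvpos : ∃ x, 0 < v x) (hη : ContDiff ℝ 2 η)
    (hηp : ∀ i, Periodic η (b i)) (hη0 : ∀ x, 0 ≤ η x)
    (hηc : ∀ x, 0 < v x → 0 < Δ η x + c x * η x) :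
    ∃ φ : E → ℝ, ContDiff ℝ 2 φ ∧ (∀ i, Periodic φ (b i)) ∧ secondVariation μ b c φ < 0 := by
  obtain ⟨K, hK⟩ := exists_norm_le_of_forall_periodic hcp hc
  have hΔη := continuous_laplacian hη
  have hJ : Continuous fun x => Δ η x + c x * η x := hΔη.add (hc.mul hη.continuous)
  let I (t : ℝ) : ℝ := ∫ x in ZSpan.fundamentalDomain b,
    (softPosPart (t ^ 2) (v x) + t * η x) * (Δ η x + c x * η x - K / 2 * t) ∂μ
  have hG : Continuous fun p : ℝ × E => softPosPart (p.1 ^ 2) (v p.2) :=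
    continuous_softPosPart.comp
      ((continuous_fst.pow 2).prodMk (hv.continuous.comp continuous_snd))
  have hη_cont := hη.continuous
  have hI : Continuous I := continuous_setIntegral_fundamentalDomain μ (by
    unfold uncurry
    fun_prop)
  have hI0 : 0 < I 0 := by
    have hpos (x : E) (hx : 0 < v x) : 0 < max (v x) 0 * (Δ η x + c x * η x) :=
      mul_pos (lt_max_of_lt_left hx) (hηc x hx)
    have := setIntegral_fundamentalDomain_pos μ
      (g := fun x => max (v x) 0 * (Δ η x + c x * η x))
      (fun i => ((hvp i).comp (max · 0)).mul
        ((periodic_laplacian (hηp i)).add ((hcp i).mul (hηp i))))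
      ((hv.continuous.max continuous_const).mul hJ)
      (fun x => (lt_or_ge 0 (v x)).elim (fun hx => (hpos x hx).le)
        fun hx => by rw [max_eq_right hx, zero_mul])
      (hvpos.imp hpos)
    simpa [I, softPosPart_zero] using this
  obtain ⟨t, hIt, ht⟩ : ∃ t, 0 < I t ∧ 0 < t :=
    (((hI.tendsto 0).eventually_const_lt hI0).filter_mono nhdsWithin_le_nhds).and
      self_mem_nhdsWithin |>.exists (f := 𝓝[>] 0)
  exact ⟨fun x => softPosPart (t ^ 2) (v x) + t * η x,
    ((contDiff_softPosPart (pow_ne_zero 2 ht.ne')).comp hv).add (contDiff_const.mul hη),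
    fun i => ((hvp i).comp (softPosPart (t ^ 2))).add ((hηp i).comp (t * ·)),
    (secondVariation_softPosPart_add_mul_le μ hc hK hv hvp hvc hη hηp hη0 ht).trans_lt
      (neg_neg_of_pos (mul_pos ht hIt))⟩

end SecondVariation

section Torus

variable {ι : Type*} [Fintype ι] {L : ι → ℝ}

/-- The vectors `L i • eᵢ`, which span the period lattice of the torus `∏ ℝ / L i ℤ`. -/
noncomputable def torusBasis (L : ι → ℝ) (hL : ∀ i, L i ≠ 0) :
    Module.Basis ι ℝ (EuclideanSpace ℝ ι) :=
  (EuclideanSpace.basisFun ι ℝ).toBasis.isUnitSMul fun i => (hL i).isUnit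

lemma torusBasis_apply [DecidableEq ι] (hL : ∀ i, L i ≠ 0) (i : ι) :
    torusBasis L hL i = L i • EuclideanSpace.single i 1 := by
  simp [torusBasis, Module.Basis.isUnitSMul_apply]

lemma torusBasis_repr (hL : ∀ i, L i ≠ 0) (x : EuclideanSpace ℝ ι) (i : ι) :
    (torusBasis L hL).repr x i = (L i)⁻¹ * x i := by
  rw [torusBasis, Module.Basis.repr_isUnitSMul]
  simp [Units.smul_def]

lemma fundamentalDomain_torusBasis (hL : ∀ i, 0 < L i) :
    ZSpan.fundamentalDomain (torusBasis L fun i => (hL i).ne') =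
      {x | ∀ i, x i ∈ Set.Ico 0 (L i)} := by
  ext x
  rw [ZSpan.mem_fundamentalDomain]
  refine forall_congr' fun i => ?_
  rw [torusBasis_repr, Set.mem_Ico, Set.mem_Ico, inv_mul_lt_iff₀ (hL i), mul_one,
    mul_nonneg_iff_of_pos_left (inv_pos.2 (hL i))]

end Torus

section SeparatedSum

variable {ι : Type*} {p : ι → ℝ → ℝ}

lemma hasFDerivAt_comp_apply [Finite ι] {q : ℝ → ℝ} (hq : Differentiable ℝ q)
    (x : EuclideanSpace ℝ ι) (i : ι) :
    HasFDerivAt (fun y : EuclideanSpace ℝ ι => q (y i))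
      (deriv q (x i) • (EuclideanSpace.proj i : EuclideanSpace ℝ ι →L[ℝ] ℝ)) x := by
  have := Fintype.ofFinite ι
  exact (hq (x i)).hasDerivAt.comp_hasFDerivAt x
    (EuclideanSpace.proj i : EuclideanSpace ℝ ι →L[ℝ] ℝ).hasFDerivAt

variable [Fintype ι]

lemma contDiff_sum_comp_apply {n : WithTop ℕ∞} (hp : ∀ i, ContDiff ℝ n (p i)) :
    ContDiff ℝ n fun x : EuclideanSpace ℝ ι => ∑ i, p i (x i) :=
  ContDiff.sum fun i _ =>
    (hp i).comp (EuclideanSpace.proj i : EuclideanSpace ℝ ι →L[ℝ] ℝ).contDiff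

lemma fderiv_sum_comp_apply_basisFun (hp : ∀ i, Differentiable ℝ (p i))
    (x : EuclideanSpace ℝ ι) (j : ι) :
    fderiv ℝ (fun y : EuclideanSpace ℝ ι => ∑ i, p i (y i)) x (EuclideanSpace.basisFun ι ℝ j) =
      deriv (p j) (x j) := by
  classical
  rw [(HasFDerivAt.fun_sum fun i _ => hasFDerivAt_comp_apply (hp i) x i).fderiv]
  simp [sum_apply]

lemma norm_gradient_sum_comp_apply_sq (hp : ∀ i, Differentiable ℝ (p i))
    (x : EuclideanSpace ℝ ι) :
    ‖gradient (fun y : EuclideanSpace ℝ ι => ∑ i, p i (y i)) x‖ ^ 2 =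
      ∑ i, deriv (p i) (x i) ^ 2 := by
  simp only [← sum_sq_fderiv_apply (EuclideanSpace.basisFun ι ℝ),
    fderiv_sum_comp_apply_basisFun hp]

lemma laplacian_sum_comp_apply (hp : ∀ i, ContDiff ℝ 2 (p i)) (x : EuclideanSpace ℝ ι) :
    Δ (fun y : EuclideanSpace ℝ ι => ∑ i, p i (y i)) x = ∑ i, deriv (deriv (p i)) (x i) := by
  classical
  rw [laplacian_eq_sum_fderiv_fderiv (EuclideanSpace.basisFun ι ℝ) (contDiff_sum_comp_apply hp)]
  refine Finset.sum_congr rfl fun j _ => ?_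
  have hp' : Differentiable ℝ (deriv (p j)) :=
    (contDiff_fderiv_apply (hp j) one_add_one_eq_two.le 1).differentiable one_ne_zero
  simp only [fderiv_sum_comp_apply_basisFun fun i => (hp i).differentiable two_ne_zero,
    (hasFDerivAt_comp_apply hp' x j).fderiv]
  simp

end SeparatedSum

section Barrier

variable {ι : Type*} [Fintype ι] {L : ι → ℝ}

open Classical in
/-- The function `∏ᵢ cosh (α cos (π (xᵢ - aᵢ) / Lᵢ))`, up to the factor `2 ^ N`, written as a sum of
exponentials over all choices of signs. The factors `cos (π (xᵢ - aᵢ) / Lᵢ)` only have period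
`2 Lᵢ`, but translating by `Lᵢ` merely flips a sign. -/
noncomputable def torusBarrier (L : ι → ℝ) (a : EuclideanSpace ℝ ι) (α : ℝ)
    (x : EuclideanSpace ℝ ι) : ℝ :=
  ∑ ε : ι → ℤˣ, Real.exp (∑ i, α * ε i * Real.cos (Real.pi / L i * (x i - a i)))

/-- The sum of the `(π / Lᵢ)² sin² (π (xᵢ - aᵢ) / Lᵢ)`, a periodic function vanishing exactly on the
lattice translates of `a`. -/
noncomputable def sumSqSin (L : ι → ℝ) (a x : EuclideanSpace ℝ ι) : ℝ :=
  ∑ i, (Real.pi / L i * Real.sin (Real.pi / L i * (x i - a i))) ^ 2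

variable (a : EuclideanSpace ℝ ι) (α : ℝ)

lemma pi_div_mul_add_torusBasis_apply [DecidableEq ι] (hL : ∀ i, L i ≠ 0)
    (x : EuclideanSpace ℝ ι) (i j : ι) :
    Real.pi / L i * ((x + torusBasis L hL j) i - a i) =
      Real.pi / L i * (x i - a i) + if i = j then Real.pi else 0 := by
  rw [torusBasis_apply]
  obtain rfl | hij := eq_or_ne i j
  · have := hL i
    simp only [PiLp.add_apply, PiLp.smul_apply, PiLp.single_eq_same, smul_eq_mul, mul_one,
      ↓reduceIte]
    field_simp
    ring
  · simp [hij]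

lemma contDiff_torusBarrier {n : WithTop ℕ∞} : ContDiff ℝ n (torusBarrier L a α) := by
  unfold torusBarrier
  fun_prop

lemma torusBarrier_pos (x : EuclideanSpace ℝ ι) : 0 < torusBarrier L a α x := by
  classical
  exact Finset.sum_pos (fun _ _ => Real.exp_pos _) Finset.univ_nonempty

lemma periodic_torusBarrier (hL : ∀ i, L i ≠ 0) (j : ι) :
    Periodic (torusBarrier L a α) (torusBasis L hL j) := fun x => by
  classical
  refine Fintype.sum_equiv (Equiv.mulRight (Pi.mulSingle j (-1))) _ _ fun ε => ?_
  congr 1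
  refine Finset.sum_congr rfl fun i _ => ?_
  rw [pi_div_mul_add_torusBasis_apply]
  obtain rfl | hij := eq_or_ne i j
  · simp [Real.cos_add_pi]
  · simp [hij]

lemma continuous_sumSqSin : Continuous (sumSqSin L a) := by
  unfold sumSqSin
  fun_prop

lemma periodic_sumSqSin (hL : ∀ i, L i ≠ 0) (j : ι) :
    Periodic (sumSqSin L a) (torusBasis L hL j) := fun x => by
  classical
  refine Finset.sum_congr rfl fun i _ => ?_
  rw [pi_div_mul_add_torusBasis_apply]
  split_ifs
  · rw [Real.sin_add_pi, mul_neg, neg_sq]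
  · rw [add_zero]

lemma sub_mem_span_of_sumSqSin_eq_zero (hL : ∀ i, L i ≠ 0) {x : EuclideanSpace ℝ ι}
    (hx : sumSqSin L a x = 0) : x - a ∈ Submodule.span ℤ (Set.range (torusBasis L hL)) := by
  rw [Module.Basis.mem_span_iff_repr_mem]
  intro i
  rw [sumSqSin, Finset.sum_eq_zero_iff_of_nonneg fun i _ => sq_nonneg _] at hx
  have hω : Real.pi / L i ≠ 0 := div_ne_zero Real.pi_ne_zero (hL i)
  have hsin : Real.sin (Real.pi / L i * (x i - a i)) = 0 := by
    simpa [hω, hL i] using hx i (Finset.mem_univ i)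
  obtain ⟨n, hn⟩ := Real.sin_eq_zero_iff.1 hsin
  refine ⟨n, ?_⟩
  rw [torusBasis_repr]
  apply mul_left_cancel₀ Real.pi_ne_zero
  simp only [PiLp.sub_apply, algebraMap_int_eq, eq_intCast]
  linear_combination hn

lemma le_laplacian_exp_sum_cos {A : ι → ℝ} (hA : ∀ i, |A i| = α) (ω : ι → ℝ)
    (x : EuclideanSpace ℝ ι) :
    (α ^ 2 * ∑ i, (ω i * Real.sin (ω i * (x i - a i))) ^ 2 - α * ∑ i, ω i ^ 2) *
        Real.exp (∑ i, A i * Real.cos (ω i * (x i - a i))) ≤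
      Δ (fun y : EuclideanSpace ℝ ι => Real.exp (∑ i, A i * Real.cos (ω i * (y i - a i)))) x := by
  let p (i : ι) (s : ℝ) : ℝ := A i * Real.cos (ω i * (s - a i))
  have hp (i : ι) : ContDiff ℝ 2 (p i) := by fun_prop
  have hline (i : ι) (s : ℝ) : HasDerivAt (fun s => ω i * (s - a i)) (ω i) s := by
    simpa using ((hasDerivAt_id s).sub_const (a i)).const_mul (ω i)
  have hp' (i : ι) : deriv (p i) = fun s => -(A i * (ω i * Real.sin (ω i * (s - a i)))) :=
    funext fun s => by
      rw [((hline i s).cos.const_mul (A i)).deriv]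
      ring
  have hp'' (i : ι) (s : ℝ) :
      deriv (deriv (p i)) s = -(A i * ω i ^ 2 * Real.cos (ω i * (s - a i))) := by
    rw [hp', (((hline i s).sin.const_mul (ω i)).const_mul (A i)).fun_neg.deriv]
    ring
  have hgrad : ∑ i, deriv (p i) (x i) ^ 2 =
      α ^ 2 * ∑ i, (ω i * Real.sin (ω i * (x i - a i))) ^ 2 := by
    have hsq (i : ι) : A i ^ 2 = α ^ 2 := by rw [← hA i, sq_abs]
    simp only [hp', neg_sq, mul_pow (A _), hsq, Finset.mul_sum]
  have hlap : -(α * ∑ i, ω i ^ 2) ≤ ∑ i, deriv (deriv (p i)) (x i) := by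
    rw [Finset.mul_sum, ← Finset.sum_neg_distrib]
    refine Finset.sum_le_sum fun i _ => ?_
    rw [hp'', neg_le_neg_iff]
    refine le_of_abs_le ?_
    rw [abs_mul, abs_mul, hA, abs_of_nonneg (sq_nonneg (ω i))]
    exact mul_le_of_le_one_right (mul_nonneg (hA i ▸ abs_nonneg _) (sq_nonneg _))
      (Real.abs_cos_le_one _)
  rw [laplacian_comp Real.contDiff_exp (contDiff_sum_comp_apply hp),
    norm_gradient_sum_comp_apply_sq fun i => (hp i).differentiable two_ne_zero,
    laplacian_sum_comp_apply hp, Real.deriv_exp, Real.deriv_exp, ← mul_add, mul_comm, hgrad,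
    sub_eq_add_neg]
  gcongr

lemma le_laplacian_torusBarrier (hα : 0 ≤ α) (x : EuclideanSpace ℝ ι) :
    (α ^ 2 * sumSqSin L a x - α * ∑ i, (Real.pi / L i) ^ 2) * torusBarrier L a α x ≤
      Δ (torusBarrier L a α) x := by
  have hα' (ε : ι → ℤˣ) (i : ι) : |α * ε i| = α := by
    rcases Int.units_eq_one_or (ε i) with h | h <;> simp [h, abs_of_nonneg hα]
  unfold torusBarrier
  rw [laplacian_fun_sum fun ε _ => by fun_prop, Finset.mul_sum]
  exact Finset.sum_le_sum fun ε _ => le_laplacian_exp_sum_cos a α (hα' ε) _ x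

lemma exists_periodic_mul_lt_laplacian (hL : ∀ i, L i ≠ 0) {v : EuclideanSpace ℝ ι → ℝ}
    (hv : ∀ i, Periodic v (torusBasis L hL i)) (hvc : Continuous v) (hneg : ∃ x, v x < 0) (K : ℝ) :
    ∃ η : EuclideanSpace ℝ ι → ℝ, ContDiff ℝ 2 η ∧ (∀ i, Periodic η (torusBasis L hL i)) ∧
      (∀ x, 0 < η x) ∧ ∀ x, 0 ≤ v x → K * η x < Δ η x := by
  obtain ⟨a, ha⟩ := hneg
  have hpos (x : EuclideanSpace ℝ ι) (hx : 0 ≤ v x) : 0 < sumSqSin L a x := by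
    refine (Finset.sum_nonneg fun i _ => sq_nonneg _).lt_of_ne' fun hzero => ?_
    have := periodic_of_mem_span hv (sub_mem_span_of_sumSqSin_eq_zero a hL hzero) a
    rw [add_sub_cancel] at this
    exact (this ▸ ha).not_ge hx
  obtain ⟨δ, hδ, hle⟩ := exists_pos_forall_le_of_forall_periodic hv (periodic_sumSqSin a hL) hvc
    (continuous_sumSqSin a) hpos
  obtain ⟨α, hK, hα⟩ : ∃ α : ℝ, K < α * (α * δ - ∑ i, (Real.pi / L i) ^ 2) ∧ 0 ≤ α :=
    (((tendsto_id.atTop_mul_atTop₀ (tendsto_atTop_add_const_right _ _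
      (tendsto_id.atTop_mul_const hδ))).eventually_gt_atTop K).and (eventually_ge_atTop 0)).exists
  refine ⟨torusBarrier L a α, contDiff_torusBarrier a α, periodic_torusBarrier a α hL,
    torusBarrier_pos a α, fun x hx => ?_⟩
  calc K * torusBarrier L a α x
      < α * (α * δ - ∑ i, (Real.pi / L i) ^ 2) * torusBarrier L a α x :=
        mul_lt_mul_of_pos_right hK (torusBarrier_pos a α x)
    _ = (α ^ 2 * δ - α * ∑ i, (Real.pi / L i) ^ 2) * torusBarrier L a α x := by ring
    _ ≤ (α ^ 2 * sumSqSin L a x - α * ∑ i, (Real.pi / L i) ^ 2) * torusBarrier L a α x := by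
        gcongr
        · exact (torusBarrier_pos a α x).le
        · exact hle x hx
    _ ≤ Δ (torusBarrier L a α) x := le_laplacian_torusBarrier a α hα x

end Barrier

section Instability

lemma laplacian_fderiv_apply_add_mul_eq_zero {E : Type*} [NormedAddCommGroup E]
    [InnerProductSpace ℝ E] [FiniteDimensional ℝ E] {f : ℝ → ℝ} (hf : Differentiable ℝ f)
    {u : E → ℝ} (hu : ContDiff ℝ 3 u) (hpde : ∀ x, Δ u x + f (u x) = 0) (c x : E) :
    Δ (fun y => fderiv ℝ u y c) x + deriv f (u x) * fderiv ℝ u x c = 0 := by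
  have hΔ : Δ u = fun x => -f (u x) := funext fun x => eq_neg_of_add_eq_zero_left (hpde x)
  have hfu : HasFDerivAt (fun x => f (u x)) (deriv f (u x) • fderiv ℝ u x) x :=
    (hf _).hasDerivAt.comp_hasFDerivAt x (hu.differentiable three_ne_zero x).hasFDerivAt
  rw [laplacian_fderiv_apply hu, hΔ, hfu.fun_neg.fderiv]
  simp

variable {ι : Type*} [Fintype ι] {L : ι → ℝ}

theorem exists_secondVariation_neg_of_nonconstant (hL : ∀ i, L i ≠ 0) {f : ℝ → ℝ}
    (hf : ContDiff ℝ 1 f) {u : EuclideanSpace ℝ ι → ℝ} (hu : ContDiff ℝ 3 u)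
    (hper : ∀ i, Periodic u (torusBasis L hL i)) (hpde : ∀ x, Δ u x + f (u x) = 0)
    (hnc : ∃ x y, u x ≠ u y) :
    ∃ φ : EuclideanSpace ℝ ι → ℝ, ContDiff ℝ 2 φ ∧ (∀ i, Periodic φ (torusBasis L hL i)) ∧
      secondVariation volume (torusBasis L hL) (fun x => deriv f (u x)) φ < 0 := by
  obtain ⟨z, c, hzc⟩ : ∃ z c, fderiv ℝ u z c ≠ 0 := by
    by_contra! hzero
    obtain ⟨x, y, hxy⟩ := hnc
    exact hxy (is_const_of_fderiv_eq_zero (hu.differentiable three_ne_zero)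
      (fun z => ContinuousLinearMap.ext (hzero z)) x y)
  have hv : ContDiff ℝ 2 fun x => fderiv ℝ u x c := contDiff_fderiv_apply hu (by norm_num) c
  have hvp (i : ι) : Periodic (fun x => fderiv ℝ u x c) (torusBasis L hL i) :=
    (periodic_fderiv (hper i)).comp fun A => A c
  have hvint := setIntegral_fundamentalDomain_fderiv_apply volume hper (hu.of_le (by norm_num)) c
  have hvpos := exists_pos_of_setIntegral_fundamentalDomain_eq_zero volume hvp hv.continuous
    ⟨z, hzc⟩ hvint
  have hvneg := exists_neg_of_setIntegral_fundamentalDomain_eq_zero volume hvp hv.continuous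
    ⟨z, hzc⟩ hvint
  have hf'u : Continuous fun x => deriv f (u x) :=
    (hf.continuous_deriv le_rfl).comp hu.continuous
  have hf'up (i : ι) : Periodic (fun x => deriv f (u x)) (torusBasis L hL i) :=
    (hper i).comp (deriv f)
  obtain ⟨K, hK⟩ := exists_norm_le_of_forall_periodic hf'up hf'u
  obtain ⟨η, hη, hηp, hη0, hKη⟩ := exists_periodic_mul_lt_laplacian hL hvp hv.continuous hvneg K
  refine exists_secondVariation_neg_of_laplacian_add_mul_pos volume hf'u hf'up hv hvp
    (laplacian_fderiv_apply_add_mul_eq_zero (hf.differentiable one_ne_zero) hu hpde c) hvpos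
    hη hηp (fun x => (hη0 x).le) fun x hx => ?_
  have hle : -K * η x ≤ deriv f (u x) * η x :=
    mul_le_mul_of_nonneg_right (neg_le_of_abs_le (hK x)) (hη0 x).le
  linarith [hKη x hx.le]

lemma Lap_eq_laplacian {N : ℕ} {u : EuclideanSpace ℝ (Fin N) → ℝ} (hu : ContDiff ℝ 2 u) :
    Lap u = Δ u := by
  ext x
  simp [laplacian_eq_sum_fderiv_fderiv (EuclideanSpace.basisFun (Fin N) ℝ) hu, Lap, Hess]

end Instability

/-- On the flat torus (periodic boundary conditions on `ℝ^N`),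
every nonconstant `C³` solution of `Δu + f(u) = 0` is weakly unstable: some Lipschitz
periodic test function `φ` makes the second variation `∫_Q (‖∇φ‖² − f'(u) φ²)` negative. -/
theorem statement1 {N : ℕ} (hN : 1 ≤ N) (L : Fin N → ℝ) (hL : ∀ i, 0 < L i)
    (f : ℝ → ℝ) (hf : ContDiff ℝ 1 f)
    (u : EuclideanSpace ℝ (Fin N) → ℝ) (hu : ContDiff ℝ 3 u)
    (hnc : ∃ x y, u x ≠ u y)
    (hper : ∀ (x : EuclideanSpace ℝ (Fin N)) (i : Fin N),
      u (x + L i • EuclideanSpace.single i 1) = u x)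
    (hpde : ∀ x, Lap u x + f (u x) = 0) :
    ∃ φ : EuclideanSpace ℝ (Fin N) → ℝ,
      (∃ K : NNReal, LipschitzWith K φ) ∧
      (∀ (x : EuclideanSpace ℝ (Fin N)) (i : Fin N),
        φ (x + L i • EuclideanSpace.single i 1) = φ x) ∧
      (∫ x in {y : EuclideanSpace ℝ (Fin N) | ∀ i, y i ∈ Set.Ico 0 (L i)},
        (‖gradient φ x‖ ^ 2 - deriv f (u x) * φ x ^ 2)) < 0 := by
  have hL0 (i : Fin N) : L i ≠ 0 := (hL i).ne'
  rw [Lap_eq_laplacian (hu.of_le (by norm_num))] at hpde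
  obtain ⟨φ, hφ, hφp, hneg⟩ := exists_secondVariation_neg_of_nonconstant hL0 hf hu
    (fun i x => by rw [torusBasis_apply, hper]) hpde hnc
  refine ⟨φ, exists_lipschitzWith_of_forall_periodic hφp (hφ.of_le one_le_two),
    fun x i => by rw [← torusBasis_apply hL0, hφp], ?_⟩
  rwa [secondVariation, fundamentalDomain_torusBasis hL] at hneg
end

section
/- Let f : ℝ → ℝ be continuously differentiable and let u : ℝ^N → ℝ be a C³ function satisfying Δu + f(u) = 0 on ℝ^N. Then at every point of U = {x : ∇u(x) ≠ 0} one has Δ(‖∇u‖) + f'(u) ‖∇u‖ = ‖∇u‖ · ‖DV‖_F², where V = ∇u/‖∇u‖ on U and ‖DV‖_F is the Frobenius norm of the derivative of V. (The function ‖∇u‖ is C² on the open set U, so its Laplacian there is classical.) -/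
/-!
Write `∇u = v V` with `v = ‖∇u‖` and `V` a field of unit vectors. As `V` is orthogonal to each
of its directional derivatives `D_e V`, pairing `D_e ∇u = (D_e v) V + v D_e V` with `V` and with
`D_e V` gives `D_e v = ⟪V, D_e ∇u⟫` and `⟪D_e V, D_e ∇u⟫ = v ‖D_e V‖²`. Differentiating the
first formula once more and inserting the second, `D_e D_e v = v ‖D_e V‖² + ⟪V, D_e D_e ∇u⟫`.
Summing over an orthonormal basis and commuting derivatives yields `Δv = v ‖DV‖² + D_V (Δu)`,
and the equation turns the last term into `-f'(u) D_V u = -f'(u) v`.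
-/

open RealInnerProductSpace MeasureTheory Filter

open NormedSpace (normalize)
open scoped Topology

section UnitField

variable {E F : Type*} [NormedAddCommGroup E] [NormedSpace ℝ E]
  [NormedAddCommGroup F] [InnerProductSpace ℝ F] {G V : E → F} {x : E}

theorem inner_fderiv_eq_zero_of_norm_eventuallyEq_const {c : ℝ} (hV : DifferentiableAt ℝ V x)
    (hc : (fun y => ‖V y‖) =ᶠ[𝓝 x] fun _ => c) (e : E) : ⟪V x, fderiv ℝ V x e⟫ = 0 := by
  have h_sq : (fun y => ⟪V y, V y⟫) =ᶠ[𝓝 x] fun _ => c ^ 2 :=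
    hc.mono fun y hy => by simp only [real_inner_self_eq_norm_sq, hy]
  have h_deriv := fderiv_inner_apply ℝ hV hV e
  rw [h_sq.fderiv_eq, fderiv_fun_const, real_inner_comm (V x)] at h_deriv
  simp only [Pi.zero_apply, zero_apply] at h_deriv
  linarith

theorem differentiableAt_normalize (hG : DifferentiableAt ℝ G x) (hx : G x ≠ 0) :
    DifferentiableAt ℝ (fun y => normalize (G y)) x :=
  ((hG.norm ℝ hx).inv (norm_ne_zero_iff.mpr hx)).smul hG

theorem inner_normalize_fderiv_normalize (hG : DifferentiableAt ℝ G x) (hx : G x ≠ 0) (e : E) :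
    ⟪normalize (G x), fderiv ℝ (fun y => normalize (G y)) x e⟫ = 0 :=
  inner_fderiv_eq_zero_of_norm_eventuallyEq_const (V := fun y => normalize (G y))
    (differentiableAt_normalize hG hx)
    ((hG.continuousAt.eventually_ne hx).mono fun _ => NormedSpace.norm_normalize_eq_one_iff.mpr) e

theorem fderiv_eq_norm_smul_add_smul_normalize (hG : DifferentiableAt ℝ G x) (hx : G x ≠ 0)
    (e : E) :
    fderiv ℝ G x e = ‖G x‖ • fderiv ℝ (fun y => normalize (G y)) x e +
      fderiv ℝ (fun y => ‖G y‖) x e • normalize (G x) := by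
  have h_polar : G = fun y => ‖G y‖ • normalize (G y) :=
    funext fun y => (NormedSpace.norm_smul_normalize (G y)).symm
  conv_lhs => rw [h_polar, fderiv_fun_smul (hG.norm ℝ hx) (differentiableAt_normalize hG hx)]
  rfl

theorem fderiv_norm_apply (hG : DifferentiableAt ℝ G x) (hx : G x ≠ 0) (e : E) :
    fderiv ℝ (fun y => ‖G y‖) x e = ⟪normalize (G x), fderiv ℝ G x e⟫ := by
  rw [fderiv_eq_norm_smul_add_smul_normalize hG hx, inner_add_right, real_inner_smul_right,
    real_inner_smul_right, inner_normalize_fderiv_normalize hG hx, real_inner_self_eq_norm_sq,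
    NormedSpace.norm_normalize_eq_one_iff.mpr hx]
  ring

theorem inner_fderiv_normalize_fderiv (hG : DifferentiableAt ℝ G x) (hx : G x ≠ 0) (e : E) :
    ⟪fderiv ℝ (fun y => normalize (G y)) x e, fderiv ℝ G x e⟫ =
      ‖G x‖ * ‖fderiv ℝ (fun y => normalize (G y)) x e‖ ^ 2 := by
  rw [fderiv_eq_norm_smul_add_smul_normalize hG hx, inner_add_right, real_inner_smul_right,
    real_inner_smul_right, real_inner_comm (normalize (G x)),
    inner_normalize_fderiv_normalize hG hx, real_inner_self_eq_norm_sq]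
  ring

end UnitField

section IteratedDirectionalDerivatives

variable {E F : Type*} [NormedAddCommGroup E] [NormedSpace ℝ E]
  [NormedAddCommGroup F] [NormedSpace ℝ F] {g : E → F} {x : E}

theorem contDiffAt_fderiv_apply {m n : WithTop ℕ∞} (hg : ContDiffAt ℝ n g x) (hmn : m + 1 ≤ n)
    (e : E) : ContDiffAt ℝ m (fun y => fderiv ℝ g y e) x :=
  (hg.fderiv_right hmn).clm_apply contDiffAt_const

theorem fderiv_fderiv_apply_comm_s4 (hg : ContDiffAt ℝ 2 g x) (a b : E) :
    fderiv ℝ (fun y => fderiv ℝ g y a) x b = fderiv ℝ (fun y => fderiv ℝ g y b) x a := by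
  have hd : DifferentiableAt ℝ (fderiv ℝ g) x :=
    (hg.fderiv_right (m := 1) (by norm_num)).differentiableAt one_ne_zero
  have h_second (v w : E) :
      fderiv ℝ (fun y => fderiv ℝ g y v) x w = fderiv ℝ (fderiv ℝ g) x w v := by
    simp [fderiv_clm_apply hd (differentiableAt_const v)]
  rw [h_second, h_second]
  exact hg.isSymmSndFDerivAt (by simp) b a

end IteratedDirectionalDerivatives

theorem fderiv_fderiv_norm_apply_self {E F : Type*} [NormedAddCommGroup E] [NormedSpace ℝ E]
    [NormedAddCommGroup F] [InnerProductSpace ℝ F] {G : E → F} {x : E}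
    (hG : ContDiffAt ℝ 2 G x) (hx : G x ≠ 0) (e : E) :
    fderiv ℝ (fun y => fderiv ℝ (fun z => ‖G z‖) y e) x e =
      ‖G x‖ * ‖fderiv ℝ (fun y => normalize (G y)) x e‖ ^ 2 +
        ⟪normalize (G x), fderiv ℝ (fun y => fderiv ℝ G y e) x e⟫ := by
  have hGd : DifferentiableAt ℝ G x := hG.differentiableAt two_ne_zero
  have hDG : DifferentiableAt ℝ (fun y => fderiv ℝ G y e) x :=
    (contDiffAt_fderiv_apply (m := 1) hG (by norm_num) e).differentiableAt one_ne_zero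
  have h_first : (fun y => fderiv ℝ (fun z => ‖G z‖) y e) =ᶠ[𝓝 x]
      fun y => ⟪normalize (G y), fderiv ℝ G y e⟫ := by
    filter_upwards [hG.eventually (by simp), hG.continuousAt.eventually_ne hx] with y hy hy0
    exact fderiv_norm_apply (hy.differentiableAt two_ne_zero) hy0 e
  rw [h_first.fderiv_eq, fderiv_inner_apply ℝ (differentiableAt_normalize hGd hx) hDG,
    inner_fderiv_normalize_fderiv hGd hx, add_comm]

section Gradient

variable {E : Type*} [NormedAddCommGroup E] [InnerProductSpace ℝ E] [CompleteSpace E]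
  {u : E → ℝ} {x : E}

theorem contDiffAt_gradient {m n : WithTop ℕ∞} (hu : ContDiffAt ℝ n u x) (hmn : m + 1 ≤ n) :
    ContDiffAt ℝ m (gradient u) x :=
  (InnerProductSpace.toDual ℝ E).symm.contDiff.contDiffAt.comp x (hu.fderiv_right hmn)

theorem inner_fderiv_gradient (hu : DifferentiableAt ℝ (gradient u) x) (w e : E) :
    ⟪w, fderiv ℝ (gradient u) x e⟫ = fderiv ℝ (fun y => fderiv ℝ u y w) x e := by
  have h_pair : (fun y => fderiv ℝ u y w) = fun y => ⟪w, gradient u y⟫ := by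
    ext y
    rw [real_inner_comm, inner_gradient_left]
  simp [h_pair, fderiv_inner_apply ℝ (differentiableAt_const w) hu]

theorem inner_fderiv_fderiv_gradient (hu : ContDiffAt ℝ 3 u x) (w e : E) :
    ⟪w, fderiv ℝ (fun y => fderiv ℝ (gradient u) y e) x e⟫ =
      fderiv ℝ (fun y => fderiv ℝ (fun z => fderiv ℝ u z e) y e) x w := by
  have hgrad : ContDiffAt ℝ 2 (gradient u) x := contDiffAt_gradient hu (by norm_num)
  have hDgrad : DifferentiableAt ℝ (fun y => fderiv ℝ (gradient u) y e) x :=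
    (contDiffAt_fderiv_apply (m := 1) hgrad (by norm_num) e).differentiableAt one_ne_zero
  have h_inner_swap : (fun y => ⟪w, fderiv ℝ (gradient u) y e⟫) =ᶠ[𝓝 x]
      fun y => fderiv ℝ (fun z => fderiv ℝ u z e) y w := by
    filter_upwards [hu.eventually (by simp), hgrad.eventually (by simp)] with y hy hy_grad
    rw [inner_fderiv_gradient (hy_grad.differentiableAt two_ne_zero),
      fderiv_fderiv_apply_comm_s4 (hy.of_le (by norm_num))]
  calc ⟪w, fderiv ℝ (fun y => fderiv ℝ (gradient u) y e) x e⟫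
      = fderiv ℝ (fun y => ⟪w, fderiv ℝ (gradient u) y e⟫) x e := by
        simp [fderiv_inner_apply ℝ (differentiableAt_const w) hDgrad]
    _ = fderiv ℝ (fun y => fderiv ℝ (fun z => fderiv ℝ u z e) y w) x e := by
        rw [h_inner_swap.fderiv_eq]
    _ = fderiv ℝ (fun y => fderiv ℝ (fun z => fderiv ℝ u z e) y e) x w :=
        fderiv_fderiv_apply_comm_s4 (contDiffAt_fderiv_apply hu (by norm_num) e) w e

theorem fderiv_apply_normalize_gradient (u : E → ℝ) (x : E) :
    fderiv ℝ u x (normalize (gradient u x)) = ‖gradient u x‖ := by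
  rw [← inner_gradient_left, NormedSpace.normalize, real_inner_smul_right,
    real_inner_self_eq_norm_sq, sq, ← mul_assoc, inv_mul_mul_self]

end Gradient

section Euclidean

variable {N : ℕ} {u : EuclideanSpace ℝ (Fin N) → ℝ} {x : EuclideanSpace ℝ (Fin N)}

theorem fderiv_lap_apply (hu : ContDiffAt ℝ 3 u x) (w : EuclideanSpace ℝ (Fin N)) :
    fderiv ℝ (Lap u) x w = ∑ i, fderiv ℝ
      (fun y => Hess u y (EuclideanSpace.single i 1) (EuclideanSpace.single i 1)) x w := by
  have h_hess (e : EuclideanSpace ℝ (Fin N)) : DifferentiableAt ℝ (fun y => Hess u y e e) x :=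
    (contDiffAt_fderiv_apply (m := 1)
      (contDiffAt_fderiv_apply (m := 2) hu (by norm_num) e) (by norm_num) e).differentiableAt
      one_ne_zero
  unfold Lap
  rw [fderiv_fun_sum fun i _ => h_hess _, sum_apply]

theorem lap_norm_gradient (hu : ContDiffAt ℝ 3 u x) (hx : gradient u x ≠ 0) :
    Lap (fun y => ‖gradient u y‖) x =
      ‖gradient u x‖ * FrobSq (fderiv ℝ (NGrad u) x) + fderiv ℝ (Lap u) x (NGrad u x) := by
  have h_second (e : EuclideanSpace ℝ (Fin N)) :
      Hess (fun y => ‖gradient u y‖) x e e =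
        ‖gradient u x‖ * ‖fderiv ℝ (NGrad u) x e‖ ^ 2 +
          fderiv ℝ (fun y => Hess u y e e) x (NGrad u x) :=
    (fderiv_fderiv_norm_apply_self (contDiffAt_gradient hu (by norm_num)) hx e).trans
      (congrArg _ (inner_fderiv_fderiv_gradient hu (NGrad u x) e))
  rw [fderiv_lap_apply hu]
  simp only [Lap, FrobSq, h_second, Finset.sum_add_distrib, Finset.mul_sum]

theorem fderiv_lap_of_lap_add_comp_eq_zero {f : ℝ → ℝ} (hf : DifferentiableAt ℝ f (u x))
    (hu : DifferentiableAt ℝ u x) (hpde : ∀ᶠ y in 𝓝 x, Lap u y + f (u y) = 0) :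
    fderiv ℝ (Lap u) x = -(deriv f (u x) • fderiv ℝ u x) := by
  have h_lap : Lap u =ᶠ[𝓝 x] fun y => -f (u y) := hpde.mono fun y => eq_neg_of_add_eq_zero_left
  rw [h_lap.fderiv_eq]
  exact (hf.hasDerivAt.comp_hasFDerivAt x hu.hasFDerivAt).neg.fderiv

theorem statement4_general {f : ℝ → ℝ} (hf : DifferentiableAt ℝ f (u x)) (hu : ContDiffAt ℝ 3 u x)
    (hpde : ∀ᶠ y in 𝓝 x, Lap u y + f (u y) = 0) (hx : gradient u x ≠ 0) :
    Lap (fun y => ‖gradient u y‖) x + deriv f (u x) * ‖gradient u x‖ =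
      ‖gradient u x‖ * FrobSq (fderiv ℝ (NGrad u) x) := by
  have h_source : fderiv ℝ (Lap u) x (NGrad u x) = -(deriv f (u x) * ‖gradient u x‖) := by
    rw [fderiv_lap_of_lap_add_comp_eq_zero hf (hu.differentiableAt three_ne_zero) hpde,
      ← fderiv_apply_normalize_gradient u x]
    rfl
  rw [lap_norm_gradient hu hx, h_source, neg_add_cancel_right]

end Euclidean

/-- For a `C³` solution of `Δu + f(u) = 0` on `ℝ^N`, the function
`v = ‖∇u‖` satisfies, at every point of `U = {∇u ≠ 0}`, the pointwise identity
`Δv + f'(u) v = v ‖DV‖_F²`, where `V = ∇u/‖∇u‖`. -/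
theorem statement4 {N : ℕ} (hN : 1 ≤ N) (f : ℝ → ℝ) (hf : ContDiff ℝ 1 f)
    (u : EuclideanSpace ℝ (Fin N) → ℝ) (hu : ContDiff ℝ 3 u)
    (hpde : ∀ x, Lap u x + f (u x) = 0)
    (x : EuclideanSpace ℝ (Fin N)) (hx : gradient u x ≠ 0) :
    Lap (fun y => ‖gradient u y‖) x + deriv f (u x) * ‖gradient u x‖ =
      ‖gradient u x‖ * FrobSq (fderiv ℝ (NGrad u) x) :=
  statement4_general (hf.differentiable one_ne_zero (u x)) hu.contDiffAt (.of_forall hpde) hx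
end

section
/- Let l > 0, let f : ℝ → ℝ be continuously differentiable, and let u : ℝ → ℝ be a nonconstant C³ function with u(t + l) = u(t) for all t, satisfying u''(t) + f(u(t)) = 0 for all t ∈ ℝ. Then there exists a C¹ function φ : ℝ → ℝ with φ(t + l) = φ(t) for all t such that ∫₀^l ( φ'(t)² − f'(u(t)) φ(t)² ) dt < 0. -/
/-!
The derivative `v = u'` solves the linearized equation `v'' + q v = 0` with `q = f'(u)`, so it is a
null direction of the second variation. Since it vanishes somewhere without vanishing identically,
`|v|` has a kink, and smoothing the kink lowers the second variation: for `φ = √(v² + c)` one finds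
`φ'² - q φ² = (v v')' - c (v'² / (v² + c) + q)`. The boundary term cancels by periodicity, while
`∫ v'² / (v² + c) → ∞` as `c → 0⁺`, because `log (v² + c)` must climb from `log c` at a zero of `v`
to a bounded value and its derivative is at most `1 + v'² / (v² + c)`.
-/

open Filter Interval Set Topology

/-- The index form `∫ₐᵇ (φ'² - q φ²)` of the Jacobi operator `v ↦ -v'' - q v` on `[a, b]`. For
`q = f' ∘ u` it is the second variation at `u` of the functional `∫ (u'² / 2 - F(u))`, `F' = f`. -/
noncomputable def indexForm (q : ℝ → ℝ) (a b : ℝ) (φ : ℝ → ℝ) : ℝ :=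
  ∫ t in a..b, (deriv φ t ^ 2 - q t * φ t ^ 2)

/-- The smoothing `√(x² + c)` of the absolute value. It is parametrized by `c` itself rather than by
`ε` with `c = ε²`, and is smooth for `c > 0`. -/
noncomputable def smoothAbs (c x : ℝ) : ℝ := √(x ^ 2 + c)

section SmoothAbs

variable {c : ℝ}

lemma smoothAbs_sq (hc : 0 < c) (x : ℝ) : smoothAbs c x ^ 2 = x ^ 2 + c :=
  Real.sq_sqrt (by positivity)

lemma contDiff_smoothAbs (hc : 0 < c) {n : WithTop ℕ∞} : ContDiff ℝ n (smoothAbs c) :=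
  ((contDiff_id.pow 2).add contDiff_const).sqrt fun x => by positivity

lemma hasDerivAt_sq_add {v : ℝ → ℝ} {d t : ℝ} (hv : HasDerivAt v d t) :
    HasDerivAt (fun s => v s ^ 2 + c) (2 * v t * d) t := by
  simpa using (hv.pow 2).add_const c

lemma deriv_smoothAbs_comp_sq (hc : 0 < c) {v : ℝ → ℝ} {d t : ℝ} (hv : HasDerivAt v d t) :
    deriv (fun s => smoothAbs c (v s)) t ^ 2 = d ^ 2 - c * (d ^ 2 / (v t ^ 2 + c)) := by
  have hpos : 0 < v t ^ 2 + c := by positivity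
  have hderiv : deriv (fun s => smoothAbs c (v s)) t = 2 * v t * d / (2 * smoothAbs c (v t)) :=
    ((hasDerivAt_sq_add hv).sqrt hpos.ne').deriv
  rw [hderiv, div_pow, mul_pow 2 (smoothAbs c _), smoothAbs_sq hc]
  field_simp
  ring

end SmoothAbs

section LogarithmicDivergence

variable {v v' : ℝ → ℝ} {a b c x y : ℝ}

lemma abs_two_mul_div_sq_add_le (hc : 0 < c) (x y : ℝ) :
    |2 * x * y / (x ^ 2 + c)| ≤ 1 + y ^ 2 / (x ^ 2 + c) := by
  have hpos : 0 < x ^ 2 + c := by positivity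
  rw [abs_div, abs_of_pos hpos, one_add_div hpos.ne', abs_mul, abs_mul, abs_two]
  gcongr
  have hamgm := two_mul_le_add_sq |x| |y|
  rw [sq_abs, sq_abs] at hamgm
  linarith

lemma continuous_sq_div_sq_add (hc : 0 < c) (hv : Continuous v) (hv' : Continuous v') :
    Continuous fun t => v' t ^ 2 / (v t ^ 2 + c) :=
  (hv'.pow 2).div (by fun_prop) fun t => by positivity

lemma integral_two_mul_div_sq_add (hc : 0 < c) (hv : ∀ t, HasDerivAt v (v' t) t)
    (hv' : Continuous v') (a b : ℝ) :
    ∫ t in a..b, 2 * v t * v' t / (v t ^ 2 + c)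
      = Real.log (v b ^ 2 + c) - Real.log (v a ^ 2 + c) := by
  have hpos : ∀ t, v t ^ 2 + c ≠ 0 := fun t => by positivity
  have hvc : Continuous v := continuous_iff_continuousAt.2 fun t => (hv t).continuousAt
  have hcont : Continuous fun t => 2 * v t * v' t / (v t ^ 2 + c) :=
    .div (by fun_prop) (by fun_prop) hpos
  exact intervalIntegral.integral_eq_sub_of_hasDerivAt
    (fun t _ => (hasDerivAt_sq_add (hv t)).log (hpos t)) (hcont.intervalIntegrable _ _)

lemma abs_log_sq_add_sub_log_sq_add_le (hc : 0 < c) (hv : ∀ t, HasDerivAt v (v' t) t)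
    (hv' : Continuous v') (ha : a ∈ Icc x y) (hb : b ∈ Icc x y) :
    |Real.log (v b ^ 2 + c) - Real.log (v a ^ 2 + c)|
      ≤ (y - x) + ∫ t in x..y, v' t ^ 2 / (v t ^ 2 + c) := by
  have hxy : x ≤ y := ha.1.trans ha.2
  have hvc : Continuous v := continuous_iff_continuousAt.2 fun t => (hv t).continuousAt
  have hw := continuous_sq_div_sq_add hc hvc hv'
  have hw₁ : Continuous fun t => 1 + v' t ^ 2 / (v t ^ 2 + c) := continuous_const.add hw
  have hnonneg : ∀ t, 0 ≤ 1 + v' t ^ 2 / (v t ^ 2 + c) := fun t => by positivity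
  have hsub : Ι a b ⊆ Ι x y := by
    apply uIoc_subset_uIoc_of_uIcc_subset_uIcc
    rw [uIcc_of_le hxy]
    exact uIcc_subset_Icc ha hb
  calc |Real.log (v b ^ 2 + c) - Real.log (v a ^ 2 + c)|
      = |∫ t in a..b, 2 * v t * v' t / (v t ^ 2 + c)| := by
        rw [integral_two_mul_div_sq_add hc hv hv']
    _ ≤ |∫ t in a..b, (1 + v' t ^ 2 / (v t ^ 2 + c))| := by
        rw [← Real.norm_eq_abs]
        exact intervalIntegral.norm_integral_le_abs_of_norm_le
          (.of_forall fun t => abs_two_mul_div_sq_add_le hc (v t) (v' t))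
          (hw₁.intervalIntegrable _ _)
    _ ≤ |∫ t in x..y, (1 + v' t ^ 2 / (v t ^ 2 + c))| :=
        intervalIntegral.abs_integral_mono_interval hsub (.of_forall hnonneg)
          (hw₁.intervalIntegrable _ _)
    _ = ∫ t in x..y, (1 + v' t ^ 2 / (v t ^ 2 + c)) :=
        abs_of_nonneg (intervalIntegral.integral_nonneg hxy fun t _ => hnonneg t)
    _ = (y - x) + ∫ t in x..y, v' t ^ 2 / (v t ^ 2 + c) := by
        rw [intervalIntegral.integral_add (by simp) (hw.intervalIntegrable _ _),
          intervalIntegral.integral_const, smul_eq_mul, mul_one]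

theorem tendsto_integral_sq_div_sq_add_atTop (hv : ∀ t, HasDerivAt v (v' t) t)
    (hv' : Continuous v') (ha : a ∈ Icc x y) (hb : b ∈ Icc x y) (hva : v a = 0) (hvb : v b ≠ 0) :
    Tendsto (fun c => ∫ t in x..y, v' t ^ 2 / (v t ^ 2 + c)) (𝓝[>] 0) atTop := by
  have hlog : Tendsto (fun c => Real.log (v b ^ 2) - (y - x) + -Real.log c) (𝓝[>] 0) atTop :=
    tendsto_atTop_add_const_left _ _ (tendsto_neg_atBot_atTop.comp Real.tendsto_log_nhdsGT_zero)
  refine tendsto_atTop_mono' _ ?_ hlog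
  filter_upwards [self_mem_nhdsWithin] with c (hc : 0 < c)
  have hosc := (le_abs_self _).trans (abs_log_sq_add_sub_log_sq_add_le hc hv hv' ha hb)
  have hmono : Real.log (v b ^ 2) ≤ Real.log (v b ^ 2 + c) :=
    Real.log_le_log (by positivity) (by linarith)
  rw [hva, zero_pow two_ne_zero, zero_add] at hosc
  linarith

end LogarithmicDivergence

section JacobiEquation

variable {q v v' : ℝ → ℝ} {a b c x y : ℝ}

theorem indexForm_smoothAbs_comp (hc : 0 < c) (hq : Continuous q)
    (hv : ∀ t, HasDerivAt v (v' t) t) (hv' : ∀ t, HasDerivAt v' (-(q t * v t)) t) :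
    indexForm q x y (fun t => smoothAbs c (v t)) = v y * v' y - v x * v' x
      - c * ((∫ t in x..y, v' t ^ 2 / (v t ^ 2 + c)) + ∫ t in x..y, q t) := by
  have hvc : Continuous v := continuous_iff_continuousAt.2 fun t => (hv t).continuousAt
  have hvc' : Continuous v' := continuous_iff_continuousAt.2 fun t => (hv' t).continuousAt
  have hw := continuous_sq_div_sq_add hc hvc hvc'
  have hintegrand : ∀ t, deriv (fun s => smoothAbs c (v s)) t ^ 2 - q t * smoothAbs c (v t) ^ 2
      = (v' t * v' t + v t * -(q t * v t)) - c * (v' t ^ 2 / (v t ^ 2 + c) + q t) := fun t => by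
    rw [deriv_smoothAbs_comp_sq hc (hv t), smoothAbs_sq hc]
    ring
  have hboundary : Continuous fun t => v' t * v' t + v t * -(q t * v t) := by fun_prop
  have hremainder : Continuous fun t => c * (v' t ^ 2 / (v t ^ 2 + c) + q t) := by fun_prop
  simp only [indexForm, hintegrand]
  rw [intervalIntegral.integral_sub (hboundary.intervalIntegrable _ _)
      (hremainder.intervalIntegrable _ _),
    intervalIntegral.integral_eq_sub_of_hasDerivAt (fun t _ => (hv t).mul (hv' t))
      (hboundary.intervalIntegrable _ _),
    intervalIntegral.integral_const_mul,
    intervalIntegral.integral_add (hw.intervalIntegrable _ _) (hq.intervalIntegrable _ _)]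
  rfl

theorem exists_indexForm_smoothAbs_comp_neg (hq : Continuous q)
    (hv : ∀ t, HasDerivAt v (v' t) t) (hv' : ∀ t, HasDerivAt v' (-(q t * v t)) t)
    (hbdry : v y * v' y = v x * v' x)
    (ha : a ∈ Icc x y) (hb : b ∈ Icc x y) (hva : v a = 0) (hvb : v b ≠ 0) :
    ∃ c > 0, indexForm q x y (fun t => smoothAbs c (v t)) < 0 := by
  have hvc' : Continuous v' := continuous_iff_continuousAt.2 fun t => (hv' t).continuousAt
  obtain ⟨c, hlarge, hc : 0 < c⟩ :=
    ((tendsto_integral_sq_div_sq_add_atTop hv hvc' ha hb hva hvb).eventually_gt_atTop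
      (-∫ t in x..y, q t) |>.and self_mem_nhdsWithin).exists
  refine ⟨c, hc, ?_⟩
  rw [indexForm_smoothAbs_comp hc hq hv hv', hbdry, sub_self, zero_sub, neg_lt_zero]
  exact mul_pos hc (by linarith)

end JacobiEquation

lemma periodic_deriv {𝕜 E : Type*} [NontriviallyNormedField 𝕜] [NormedAddCommGroup E]
    [NormedSpace 𝕜 E] {u : 𝕜 → E} {l : 𝕜} (hu : Function.Periodic u l) :
    Function.Periodic (deriv u) l := fun t => by
  rw [← deriv_comp_add_const, funext hu]

lemma exists_mem_Ico_deriv_ne_zero {E : Type*} [NormedAddCommGroup E] [NormedSpace ℝ E]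
    {u : ℝ → E} {l : ℝ} (hl : 0 < l) (hu : Differentiable ℝ u) (hper : Function.Periodic u l)
    (hnc : ∃ s t, u s ≠ u t) : ∃ b ∈ Ico 0 l, deriv u b ≠ 0 := by
  obtain ⟨s, t, hst⟩ := hnc
  obtain ⟨b₀, hb₀⟩ : ∃ b, deriv u b ≠ 0 := by
    by_contra! hzero
    exact hst (is_const_of_deriv_eq_zero hu hzero s t)
  obtain ⟨b, hb, heq⟩ := (periodic_deriv hper).exists_mem_Ico₀ hl b₀
  exact ⟨b, hb, heq ▸ hb₀⟩

/-- the paper's one-dimensional case, `M = S¹`. Every nonconstant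
`l`-periodic `C³` solution of `u'' + f(u) = 0` has a direction of strictly negative
second variation: there is a `C¹` `l`-periodic `φ` with `∫₀^l (φ'² − f'(u) φ²) < 0`. -/
theorem statement6 (l : ℝ) (hl : 0 < l) (f : ℝ → ℝ) (hf : ContDiff ℝ 1 f)
    (u : ℝ → ℝ) (hu : ContDiff ℝ 3 u)
    (hnc : ∃ s t, u s ≠ u t)
    (hper : ∀ t, u (t + l) = u t)
    (hode : ∀ t, deriv (deriv u) t + f (u t) = 0) :
    ∃ φ : ℝ → ℝ, ContDiff ℝ 1 φ ∧ (∀ t, φ (t + l) = φ t) ∧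
      (∫ t in (0:ℝ)..l, (deriv φ t ^ 2 - deriv f (u t) * φ t ^ 2)) < 0 := by
  have hdu : Differentiable ℝ u := hu.differentiable (by norm_num)
  have hv : ContDiff ℝ 1 (deriv u) := (hu.of_le (by norm_num)).deriv'
  have hperv : Function.Periodic (deriv u) l := periodic_deriv hper
  have hv' : ∀ t, HasDerivAt (deriv u) (-f (u t)) t := fun t =>
    eq_neg_of_add_eq_zero_left (hode t) ▸ (hv.differentiable one_ne_zero t).hasDerivAt
  have hv'' : ∀ t, HasDerivAt (fun s => -f (u s)) (-(deriv f (u t) * deriv u t)) t := fun t =>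
    ((hf.differentiable one_ne_zero (u t)).hasDerivAt.comp t (hdu t).hasDerivAt).neg
  have hq : Continuous fun t => deriv f (u t) := (hf.continuous_deriv le_rfl).comp hdu.continuous
  have hbdry : deriv u l * -f (u l) = deriv u 0 * -f (u 0) := by
    rw [hperv.eq, Function.Periodic.eq hper]
  obtain ⟨a, ha, hva⟩ : ∃ a ∈ Ioo 0 l, deriv u a = 0 :=
    exists_deriv_eq_zero hl hdu.continuous.continuousOn (Function.Periodic.eq hper).symm
  obtain ⟨b, hb, hvb⟩ := exists_mem_Ico_deriv_ne_zero hl hdu hper hnc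
  obtain ⟨c, hc, hneg⟩ := exists_indexForm_smoothAbs_comp_neg hq hv' hv'' hbdry
    (Ioo_subset_Icc_self ha) (Ico_subset_Icc_self hb) hva hvb
  exact ⟨fun t => smoothAbs c (deriv u t), (contDiff_smoothAbs hc).comp hv,
    fun t => congrArg (smoothAbs c) (hperv t), hneg⟩
end

section
/- Let g : ℝ → ℝ be locally Lipschitz and let h : ℝ → ℝ be a C² function satisfying h''(t) + g(h(t)) = 0 for all t ∈ ℝ. If h'(a) = 0 and h'(b) = 0 for some real numbers a < b, then h is periodic with period 2(b − a): h(t + 2(b − a)) = h(t) for all t ∈ ℝ. -/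
/-!
In the phase space variables `(h, h')` the equation `h'' + g(h) = 0` is a first-order system which
is reversible: the map `R (x, y) = (x, -y)` sends its vector field `v` to `-v`. Hence if `γ` is an
integral curve, so is `t ↦ R (γ (2c - t))`. When `c` is a critical point of `h`, the phase point
`γ c` is fixed by `R`, so the two curves agree at `c` and therefore everywhere, by uniqueness. The
two reflections `t ↦ 2a - t` and `t ↦ 2b - t` compose to the translation by `2(b - a)`.
-/

section Uniqueness

open Topology

variable {E : Type*} [NormedAddCommGroup E] [NormedSpace ℝ E] {v : E → E} {γ γ' : ℝ → E} {t₀ : ℝ}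

theorem eventuallyEq_of_isIntegralCurve_of_locallyLipschitz (hv : LocallyLipschitz v)
    (hγ : IsIntegralCurve γ fun _ ↦ v) (hγ' : IsIntegralCurve γ' fun _ ↦ v)
    (heq : γ t₀ = γ' t₀) : γ =ᶠ[𝓝 t₀] γ' := by
  obtain ⟨K, s, hs, hvs⟩ := hv (γ t₀)
  have hγs : ∀ᶠ t in 𝓝 t₀, γ t ∈ s := hγ.continuous.continuousAt hs
  have hγs' : ∀ᶠ t in 𝓝 t₀, γ' t ∈ s := hγ'.continuous.continuousAt (heq ▸ hs)
  exact ODE_solution_unique_of_eventually (.of_forall fun _ ↦ hvs)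
    (hγs.mono fun t ht ↦ ⟨hγ t, ht⟩) (hγs'.mono fun t ht ↦ ⟨hγ' t, ht⟩) heq

theorem eq_of_isIntegralCurve_of_locallyLipschitz (hv : LocallyLipschitz v)
    (hγ : IsIntegralCurve γ fun _ ↦ v) (hγ' : IsIntegralCurve γ' fun _ ↦ v)
    (heq : γ t₀ = γ' t₀) : γ = γ' := by
  have hclopen : IsClopen {t | γ t = γ' t} :=
    ⟨isClosed_eq hγ.continuous hγ'.continuous, isOpen_iff_mem_nhds.2 fun _ ht ↦
      eventuallyEq_of_isIntegralCurve_of_locallyLipschitz hv hγ hγ' ht⟩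
  exact funext <| Set.eq_univ_iff_forall.1 <| hclopen.eq_univ ⟨t₀, heq⟩

end Uniqueness

section Reversible

variable {E : Type*} [NormedAddCommGroup E] [NormedSpace ℝ E] {v : E → E} {R : E →L[ℝ] E}
  {γ : ℝ → E}

theorem isIntegralCurve_comp_const_sub_of_reversible (hR : ∀ x, v (R x) = -R (v x))
    (hγ : IsIntegralCurve γ fun _ ↦ v) (c : ℝ) :
    IsIntegralCurve (fun t ↦ R (γ (c - t))) fun _ ↦ v := fun t ↦ by
  have hreflected : HasDerivAt (fun t ↦ γ (c - t)) (-v (γ (c - t))) t :=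
    (hγ (c - t)).comp_const_sub c t
  simpa only [hR, map_neg, Function.comp_def] using R.hasFDerivAt.comp_hasDerivAt t hreflected

theorem apply_two_mul_sub_of_reversible (hv : LocallyLipschitz v)
    (hR : ∀ x, v (R x) = -R (v x)) (hγ : IsIntegralCurve γ fun _ ↦ v) {c : ℝ}
    (hc : R (γ c) = γ c) (t : ℝ) : γ (2 * c - t) = R (γ t) := by
  have heq : (fun t ↦ R (γ (2 * c - t))) = γ :=
    eq_of_isIntegralCurve_of_locallyLipschitz (t₀ := c) hv
      (isIntegralCurve_comp_const_sub_of_reversible hR hγ (2 * c)) hγ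
      (by rwa [two_mul, add_sub_cancel_right])
  simpa only [sub_sub_cancel] using (congrFun heq (2 * c - t)).symm

theorem periodic_of_reversible (hv : LocallyLipschitz v)
    (hR : ∀ x, v (R x) = -R (v x)) (hγ : IsIntegralCurve γ fun _ ↦ v) {a b : ℝ}
    (ha : R (γ a) = γ a) (hb : R (γ b) = γ b) : Function.Periodic γ (2 * (b - a)) := fun t ↦
  calc
    γ (t + 2 * (b - a)) = γ (2 * b - (2 * a - t)) := by ring_nf
    _ = R (γ (2 * a - t)) := apply_two_mul_sub_of_reversible hv hR hγ hb _
    _ = γ (2 * a - (2 * a - t)) := (apply_two_mul_sub_of_reversible hv hR hγ ha _).symm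
    _ = γ t := by rw [sub_sub_cancel]

end Reversible

section PhaseSpace

variable {E : Type*} [NormedAddCommGroup E]

/-- The vector field on the phase space `E × E` of pairs `(position, velocity)` whose integral
curves are the pairs `(h, h')` with `h'' + g(h) = 0`. -/
def phaseField (g : E → E) (p : E × E) : E × E := (p.2, -g p.1)

theorem locallyLipschitz_phaseField {g : E → E} (hg : LocallyLipschitz g) :
    LocallyLipschitz (phaseField g) :=
  LipschitzWith.prod_snd.locallyLipschitz.prodMk
    (hg.comp LipschitzWith.prod_fst.locallyLipschitz).neg

variable [NormedSpace ℝ E]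

theorem isIntegralCurve_phaseField {g : E → E} {h h' : ℝ → E} (hh : ∀ t, HasDerivAt h (h' t) t)
    (hh' : ∀ t, HasDerivAt h' (-g (h t)) t) :
    IsIntegralCurve (fun t ↦ (h t, h' t)) fun _ ↦ phaseField g :=
  fun t ↦ (hh t).prodMk (hh' t)

variable (E) in
/-- Time reversal on the phase space: it keeps the position and reverses the velocity, so its fixed
points are the states at rest. -/
def velocityReversal : E × E →L[ℝ] E × E :=
  (ContinuousLinearMap.id ℝ E).prodMap (-ContinuousLinearMap.id ℝ E)

theorem velocityReversal_apply (p : E × E) : velocityReversal E p = (p.1, -p.2) := rfl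

theorem phaseField_velocityReversal (g : E → E) (p : E × E) :
    phaseField g (velocityReversal E p) = -velocityReversal E (phaseField g p) := by
  simp only [phaseField, velocityReversal_apply, Prod.neg_mk, neg_neg]

theorem statement9_general {g : E → E} (hg : LocallyLipschitz g) {h h' : ℝ → E}
    (hh : ∀ t, HasDerivAt h (h' t) t) (hh' : ∀ t, HasDerivAt h' (-g (h t)) t) {a b : ℝ}
    (ha : h' a = 0) (hb : h' b = 0) : Function.Periodic h (2 * (b - a)) := by
  have fixed_of_rest : ∀ t, h' t = 0 → velocityReversal E (h t, h' t) = (h t, h' t) :=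
    fun t ht ↦ by rw [velocityReversal_apply, ht, neg_zero]
  have hphase : Function.Periodic (fun t ↦ (h t, h' t)) (2 * (b - a)) :=
    periodic_of_reversible (locallyLipschitz_phaseField hg)
      (phaseField_velocityReversal g) (isIntegralCurve_phaseField hh hh')
      (fixed_of_rest a ha) (fixed_of_rest b hb)
  exact hphase.comp Prod.fst

end PhaseSpace

/-- periodicity, Lemma 3.5(d). A `C²` solution of `h'' + g(h) = 0`
(`g` locally Lipschitz) with two critical points `a < b` is periodic of period `2(b − a)`. -/
theorem statement9 (g : ℝ → ℝ) (hg : LocallyLipschitz g)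
    (h : ℝ → ℝ) (hh : ContDiff ℝ 2 h)
    (hode : ∀ t, deriv (deriv h) t + g (h t) = 0)
    (a b : ℝ) (hab : a < b) (ha : deriv h a = 0) (hb : deriv h b = 0) :
    ∀ t : ℝ, h (t + 2 * (b - a)) = h t :=
  statement9_general hg (fun t ↦ (hh.differentiable two_ne_zero t).hasDerivAt)
    (fun t ↦ eq_neg_of_add_eq_zero_left (hode t) ▸ (hh.differentiable_deriv_two t).hasDerivAt) ha hb
end

section
/- Let u : ℝ^N → ℝ be a C² function and suppose that DV ≡ 0 on U, i.e. the normalized gradient V = ∇u/‖∇u‖ has vanishing derivative at every point of U = {x : ∇u(x) ≠ 0}. Then at every x ∈ U the Hessian of u has the rank-one form Hess u(x)(w₁, w₂) = Δu(x) · ⟨V(x), w₁⟩ ⟨V(x), w₂⟩ for all w₁, w₂ ∈ ℝ^N. -/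
open RealInnerProductSpace MeasureTheory Filter

/-!
Write `∇u = ‖∇u‖ V`. Where `DV = 0`, the product rule leaves `D∇u = D‖∇u‖ ⊗ V`. Since `D∇u` is
symmetric and `V` is a unit vector, the functional `D‖∇u‖` must be a multiple of `⟪V, ·⟫`, so
`D∇u = c V ⊗ V*`; taking traces identifies `c` with `Δu`.
-/

section NormalizedField

open NormedSpace

variable {E F : Type*} [NormedAddCommGroup E] [NormedSpace ℝ E]
  [NormedAddCommGroup F] [InnerProductSpace ℝ F] {Z : E → F} {x : E}

lemma differentiableAt_normalize_comp_s10 (hZ : DifferentiableAt ℝ Z x) (hx : Z x ≠ 0) :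
    DifferentiableAt ℝ (fun y ↦ normalize (Z y)) x :=
  ((hZ.norm ℝ hx).inv (norm_ne_zero_iff.mpr hx)).smul hZ

lemma fderiv_eq_smulRight_of_fderiv_normalize_eq_zero (hZ : DifferentiableAt ℝ Z x)
    (hx : Z x ≠ 0) (hV : fderiv ℝ (fun y ↦ normalize (Z y)) x = 0) :
    fderiv ℝ Z x = (fderiv ℝ (fun y ↦ ‖Z y‖) x).smulRight (normalize (Z x)) := by
  calc fderiv ℝ Z x = fderiv ℝ (fun y ↦ ‖Z y‖ • normalize (Z y)) x := by
        simp only [norm_smul_normalize]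
    _ = (fderiv ℝ (fun y ↦ ‖Z y‖) x).smulRight (normalize (Z x)) := by
        rw [fderiv_fun_smul (hZ.norm ℝ hx) (differentiableAt_normalize_comp_s10 hZ hx), hV,
          smul_zero, zero_add]

end NormalizedField

section Symmetric

open InnerProductSpace

variable {𝕜 E : Type*} [RCLike 𝕜] [NormedAddCommGroup E] [InnerProductSpace 𝕜 E]

lemma smulRight_eq_smul_rankOne_of_isSymmetric {ℓ : StrongDual 𝕜 E} {v : E} (hv : ‖v‖ = 1)
    (hℓ : (ℓ.smulRight v).IsSymmetric) : ℓ.smulRight v = ℓ v • rankOne 𝕜 v v := by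
  have apply_eq (w : E) : ℓ w = starRingEnd 𝕜 (ℓ v) * inner 𝕜 v w := by
    simpa [inner_smul_left, inner_smul_right, hv] using (hℓ v w).symm
  have conj_eq : starRingEnd 𝕜 (ℓ v) = ℓ v := by
    simpa [hv] using (apply_eq v).symm
  ext w
  simp [apply_eq w, conj_eq, mul_smul]

end Symmetric

section Gradient

open InnerProductSpace Gradient Laplacian NormedSpace Topology

variable {E : Type*} [NormedAddCommGroup E] [InnerProductSpace ℝ E]

section Hilbert

variable [CompleteSpace E] {u : E → ℝ} {x : E}

lemma differentiableAt_gradient_iff :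
    DifferentiableAt ℝ (∇ u) x ↔ DifferentiableAt ℝ (fderiv ℝ u) x :=
  (toDual ℝ E).symm.toContinuousLinearEquiv.comp_differentiableAt_iff

lemma differentiableAt_gradient_of_contDiffAt (hu : ContDiffAt ℝ 2 u x) :
    DifferentiableAt ℝ (∇ u) x :=
  differentiableAt_gradient_iff.mpr <|
    (hu.fderiv_right (m := 1) (by norm_num)).differentiableAt one_ne_zero

-- The gradient takes the junk value `0` wherever `u` is not differentiable.
lemma eventually_differentiableAt_of_gradient_ne_zero (hu : ContinuousAt (∇ u) x)
    (hx : ∇ u x ≠ 0) : ∀ᶠ y in 𝓝 x, DifferentiableAt ℝ u y := by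
  filter_upwards [hu.eventually_ne hx] with y hy
  exact not_imp_comm.mp gradient_eq_zero_of_not_differentiableAt hy

lemma inner_fderiv_gradient_s10 (u : E → ℝ) (x v w : E) :
    ⟪fderiv ℝ (∇ u) x v, w⟫ = fderiv ℝ (fderiv ℝ u) x v w := by
  have h : fderiv ℝ (∇ u) x =
      (toDual ℝ E).symm.toContinuousLinearEquiv.toContinuousLinearMap.comp
        (fderiv ℝ (fderiv ℝ u) x) :=
    (toDual ℝ E).symm.toContinuousLinearEquiv.comp_fderiv
  rw [h]
  exact toDual_symm_apply

lemma isSymmetric_fderiv_gradient (hu : ∀ᶠ y in 𝓝 x, DifferentiableAt ℝ u y)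
    (hgrad : DifferentiableAt ℝ (∇ u) x) : (fderiv ℝ (∇ u) x).IsSymmetric := by
  intro v w
  have hD : DifferentiableAt ℝ (fderiv ℝ u) x := differentiableAt_gradient_iff.mp hgrad
  calc ⟪fderiv ℝ (∇ u) x v, w⟫ = fderiv ℝ (fderiv ℝ u) x v w := inner_fderiv_gradient_s10 u x v w
    _ = fderiv ℝ (fderiv ℝ u) x w v :=
      second_derivative_symmetric_of_eventually (hu.mono fun _ hy ↦ hy.hasFDerivAt)
        hD.hasFDerivAt v w
    _ = ⟪v, fderiv ℝ (∇ u) x w⟫ := by rw [← inner_fderiv_gradient_s10, real_inner_comm]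

theorem fderiv_gradient_eq_smul_rankOne_of_fderiv_normalize_eq_zero
    (hgrad : DifferentiableAt ℝ (∇ u) x) (hx : ∇ u x ≠ 0)
    (hV : fderiv ℝ (fun y ↦ normalize (∇ u y)) x = 0) :
    fderiv ℝ (∇ u) x = fderiv ℝ (fun y ↦ ‖∇ u y‖) x (normalize (∇ u x)) •
      rankOne ℝ (normalize (∇ u x)) (normalize (∇ u x)) := by
  have hsymm : (fderiv ℝ (∇ u) x).IsSymmetric :=
    isSymmetric_fderiv_gradient
      (eventually_differentiableAt_of_gradient_ne_zero hgrad.continuousAt hx) hgrad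
  have hsmul := fderiv_eq_smulRight_of_fderiv_normalize_eq_zero hgrad hx hV
  rw [hsmul] at hsymm ⊢
  exact smulRight_eq_smul_rankOne_of_isSymmetric (norm_normalize hx) hsymm

end Hilbert

section FiniteDimensional

variable [FiniteDimensional ℝ E]

lemma laplacian_eq_trace_fderiv_gradient (u : E → ℝ) (x : E) :
    Δ u x = LinearMap.trace ℝ E (fderiv ℝ (∇ u) x) := by
  simp [laplacian_eq_iteratedFDeriv_stdOrthonormalBasis, iteratedFDeriv_two_apply,
    LinearMap.trace_eq_sum_inner _ (stdOrthonormalBasis ℝ E), ← inner_fderiv_gradient_s10,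
    real_inner_comm]

theorem statement10_general {u : E → ℝ} {x : E} (hgrad : DifferentiableAt ℝ (∇ u) x)
    (hx : ∇ u x ≠ 0) (hV : fderiv ℝ (fun y ↦ normalize (∇ u y)) x = 0) :
    fderiv ℝ (∇ u) x = Δ u x • rankOne ℝ (normalize (∇ u x)) (normalize (∇ u x)) := by
  have hrank := fderiv_gradient_eq_smul_rankOne_of_fderiv_normalize_eq_zero hgrad hx hV
  have htrace : Δ u x = fderiv ℝ (fun y ↦ ‖∇ u y‖) x (normalize (∇ u x)) := by
    rw [laplacian_eq_trace_fderiv_gradient, hrank]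
    simp [trace_rankOne, norm_normalize hx]
  rw [htrace, ← hrank]

end FiniteDimensional

section Euclidean

variable {N : ℕ} {u : EuclideanSpace ℝ (Fin N) → ℝ} {x : EuclideanSpace ℝ (Fin N)}

variable (u x) in
lemma NGrad_eq_normalize : NGrad u x = normalize (∇ u x) :=
  rfl

lemma Hess_eq_inner_fderiv_gradient (hgrad : DifferentiableAt ℝ (∇ u) x)
    (w₁ w₂ : EuclideanSpace ℝ (Fin N)) : Hess u x w₁ w₂ = ⟪fderiv ℝ (∇ u) x w₂, w₁⟫ := by
  have hinner : (fun y ↦ fderiv ℝ u y w₁) = fun y ↦ ⟪∇ u y, w₁⟫ :=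
    funext fun _ ↦ inner_gradient_left.symm
  rw [Hess, hinner, fderiv_inner_apply ℝ hgrad (differentiableAt_const w₁)]
  simp

lemma Lap_eq_laplacian_s10 (hgrad : DifferentiableAt ℝ (∇ u) x) : Lap u x = Δ u x := by
  simp [Lap, Hess_eq_inner_fderiv_gradient hgrad, inner_fderiv_gradient_s10,
    laplacian_eq_iteratedFDeriv_orthonormalBasis u (EuclideanSpace.basisFun (Fin N) ℝ),
    iteratedFDeriv_two_apply]

end Euclidean

end Gradient

/-- equation (forma-Hu) of the paper, flat case. If the normalized
gradient `V` of a `C²` function `u` is parallel (`DV ≡ 0` on `U = {∇u ≠ 0}`), then on `U`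
the Hessian has the rank-one form `Hess u = (Δu) V ⊗ V*`. -/
theorem statement10 {N : ℕ} (hN : 1 ≤ N)
    (u : EuclideanSpace ℝ (Fin N) → ℝ) (hu : ContDiff ℝ 2 u)
    (hDV : ∀ x, gradient u x ≠ 0 → fderiv ℝ (NGrad u) x = 0)
    (x : EuclideanSpace ℝ (Fin N)) (hx : gradient u x ≠ 0) :
    ∀ w₁ w₂ : EuclideanSpace ℝ (Fin N),
      Hess u x w₁ w₂ = Lap u x * ⟪NGrad u x, w₁⟫ * ⟪NGrad u x, w₂⟫ := by
  intro w₁ w₂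
  have hgrad := differentiableAt_gradient_of_contDiffAt (x := x) hu.contDiffAt
  rw [Hess_eq_inner_fderiv_gradient hgrad, Lap_eq_laplacian_s10 hgrad,
    statement10_general hgrad hx (hDV x hx)]
  simp only [NGrad_eq_normalize, smul_apply, InnerProductSpace.rankOne_apply,
    real_inner_smul_left]
  ring
end
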